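/- arXiv:1803.11435 — 2 statements merged into one kernel-verified Lean document; each statement's English description precedes it below -/
import Mathlib

section
/- Assume the heat kernel has the form p(t,x,y) = C₁ t^{-d/α} F(C₂ ρ(x,y) t^{-1/α}) and that ∫₁^∞ s^{d+αβ-1} F(s) ds < ∞ (hence also ∫₀^∞ s^{d+αβ-1} F(s) ds < ∞ since F is bounded by F(0)). Then, as ρ(x,y) t^{-1/(αβ)} → ∞, the subordinate kernel satisfies p^S(t,x,y) ∼ C₁ (αβ/Γ(1-β)) C₂^{-d-αβ} (∫₀^∞ s^{d+αβ-1} F(s) ds) · ρ(x,y)^{-d-αβ} t; that is, for every ε > 0 there exists R > 0 such that whenever t > 0, x, y ∈ M and ρ(x,y) t^{-1/(αβ)} ≥ R, the ratio of the two sides lies within ε of 1. -/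
/-!
Let `S` have law `μ`. After scaling, the subordinate kernel at distance `D` and time `t` is
`C₁ C₂^(-(d+αβ)) D^(-(d+αβ)) t` times `∫ G dN_x`, where `G(u) = u^(-d/α) F(u^(-1/α))`, the scale is
`x = (C₂ D)^α t^(-1/β)`, and `N_x` is `x^β` times the law of `S / x` (`subordinate_eq`). As `x → ∞`
the measures `N_x` converge to the Lévy measure `ν(du) = β / Γ(1-β) u^(-1-β) du` of the subordinator,
so the theorem amounts to `∫ G dN_x → ∫ G dν`, and the substitution `s = u^(-1/α)` identifies the
limit with `αβ / Γ(1-β) ∫ s^(d+αβ-1) F(s) ds` (`lintegral_profile`).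

The convergence is a Karamata-type argument. The Laplace exponents `∫ (1 - e^{-ru}) dN_x` converge to
`r^β = ∫ (1 - e^{-ru}) dν`; by the Weierstrass theorem in the variable `e^{-u}` this yields
convergence against continuous functions (`tendsto_integral_weight`), and by sandwiching, of
`∫_U u^(-p) dN_x` for half-lines `U` (`tendsto_lintegral_halfLine`). The function `G` may be
discontinuous and need not be `O(1 - e^{-u})` at `0`, but `u ↦ F(u^(-1/α))` is increasing, so its superlevel sets are
half-lines: the layer-cake formula writes `∫ G dN_x` as an integral over levels of such half-line
quantities, which are dominated, uniformly in `x`, by a multiple of the corresponding quantity for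
`ν` (`scaledLaw_tail_le`). Since `∫ G dν < ∞`, dominated convergence in the level concludes
(`tendsto_lintegral_of_halfLines`).
-/

open MeasureTheory Set
open Filter Topology

/-! ### From Laplace exponents to half-lines -/

section Vague

variable {ι : Type*} {l : Filter ι} {N : ι → Measure ℝ} {ν : Measure ℝ}

lemma integrable_weight_mul {ρ : Measure ℝ} (hpos : ∀ᵐ u ∂ρ, 0 < u)
    (hint : Integrable (fun u => 1 - Real.exp (-u)) ρ) {f : ℝ → ℝ} (hf : Continuous f) :
    Integrable (fun u => (1 - Real.exp (-u)) * f (Real.exp (-u))) ρ := by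
  obtain ⟨C, hC⟩ := isCompact_Icc.exists_bound_of_continuousOn (s := Icc (0:ℝ) 1) hf.continuousOn
  refine hint.mul_bdd (c := C) (by fun_prop) ?_
  filter_upwards [hpos] with u hu
  exact hC _ ⟨(Real.exp_pos _).le, Real.exp_le_one_iff.2 (by linarith)⟩

/-- Replacing `f` by a uniformly `δ`-close function on `[0, 1]` changes the weighted integral by at
most `δ` times the total weight. -/
lemma abs_integral_weight_sub_le {ρ : Measure ℝ} (hpos : ∀ᵐ u ∂ρ, 0 < u)
    (hint : Integrable (fun u => 1 - Real.exp (-u)) ρ) {f g : ℝ → ℝ} (hf : Continuous f)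
    (hg : Continuous g) {δ : ℝ} (hfg : ∀ x ∈ Icc (0:ℝ) 1, |g x - f x| < δ) :
    |(∫ u, (1 - Real.exp (-u)) * f (Real.exp (-u)) ∂ρ) -
      ∫ u, (1 - Real.exp (-u)) * g (Real.exp (-u)) ∂ρ| ≤ δ * ∫ u, (1 - Real.exp (-u)) ∂ρ := by
  rw [← integral_sub (integrable_weight_mul hpos hint hf) (integrable_weight_mul hpos hint hg),
    ← integral_const_mul, ← Real.norm_eq_abs]
  refine norm_integral_le_of_norm_le (hint.const_mul δ) ?_
  filter_upwards [hpos] with u hu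
  have h1 : Real.exp (-u) ≤ 1 := Real.exp_le_one_iff.2 (by linarith)
  rw [← mul_sub, norm_mul, Real.norm_eq_abs, Real.norm_eq_abs, abs_of_nonneg (by linarith),
    mul_comm, abs_sub_comm]
  exact mul_le_mul_of_nonneg_right (hfg _ ⟨(Real.exp_pos _).le, h1⟩).le (by linarith)

lemma integral_weight_mul_monomial {ρ : Measure ℝ}
    (hint : ∀ k : ℕ, Integrable (fun u => 1 - Real.exp (-(k * u))) ρ) (k : ℕ) :
    ∫ u, (1 - Real.exp (-u)) * Real.exp (-u) ^ k ∂ρ =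
      (∫ u, (1 - Real.exp (-((k + 1 : ℕ) * u))) ∂ρ) - ∫ u, (1 - Real.exp (-(k * u))) ∂ρ := by
  rw [← integral_sub (hint _) (hint _)]
  congr 1 with u
  have : Real.exp (-((k + 1 : ℕ) * u)) = Real.exp (-u) * Real.exp (-u) ^ k := by
    rw [← pow_succ', ← Real.exp_nat_mul]; congr 1; push_cast; ring
  have h2 : Real.exp (-(k * u)) = Real.exp (-u) ^ k := by
    rw [← Real.exp_nat_mul]; congr 1; ring
  rw [this, h2]; ring

/-- Convergence of the Laplace exponents at the integers gives convergence of all the integrals of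
`(1 - e⁻ᵘ) f(e⁻ᵘ)` with `f` continuous: by the Weierstrass theorem it suffices to treat monomials
`f(x) = xᵏ`, and there the integral is a difference of two Laplace exponents. -/
lemma tendsto_integral_weight (hNpos : ∀ i, ∀ᵐ u ∂N i, 0 < u) (hνpos : ∀ᵐ u ∂ν, 0 < u)
    (hNint : ∀ i, ∀ k : ℕ, Integrable (fun u => 1 - Real.exp (-(k * u))) (N i))
    (hνint : ∀ k : ℕ, Integrable (fun u => 1 - Real.exp (-(k * u))) ν)
    (hlim : ∀ k : ℕ, Tendsto (fun i => ∫ u, (1 - Real.exp (-(k * u))) ∂N i) l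
      (𝓝 (∫ u, (1 - Real.exp (-(k * u))) ∂ν)))
    {f : ℝ → ℝ} (hf : Continuous f) :
    Tendsto (fun i => ∫ u, (1 - Real.exp (-u)) * f (Real.exp (-u)) ∂N i) l
      (𝓝 (∫ u, (1 - Real.exp (-u)) * f (Real.exp (-u)) ∂ν)) := by
  have hN1 : ∀ i, Integrable (fun u => 1 - Real.exp (-u)) (N i) := fun i => by
    simpa using hNint i 1
  have hν1 : Integrable (fun u => 1 - Real.exp (-u)) ν := by simpa using hνint 1
  have hlim1 : Tendsto (fun i => ∫ u, (1 - Real.exp (-u)) ∂N i) l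
      (𝓝 (∫ u, (1 - Real.exp (-u)) ∂ν)) := by simpa using hlim 1
  have hpoly : ∀ P : Polynomial ℝ,
      Tendsto (fun i => ∫ u, (1 - Real.exp (-u)) * P.eval (Real.exp (-u)) ∂N i) l
      (𝓝 (∫ u, (1 - Real.exp (-u)) * P.eval (Real.exp (-u)) ∂ν)) := by
    intro P
    have key : ∀ ρ : Measure ℝ, (∀ᵐ u ∂ρ, 0 < u) → Integrable (fun u => 1 - Real.exp (-u)) ρ →
        (∀ k : ℕ, Integrable (fun u => 1 - Real.exp (-(k * u))) ρ) →
        ∫ u, (1 - Real.exp (-u)) * P.eval (Real.exp (-u)) ∂ρ =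
          ∑ k ∈ Finset.range (P.natDegree + 1), P.coeff k *
            ((∫ u, (1 - Real.exp (-((k + 1 : ℕ) * u))) ∂ρ) -
              ∫ u, (1 - Real.exp (-(k * u))) ∂ρ) := by
      intro ρ hp h1 hk
      simp_rw [Polynomial.eval_eq_sum_range, Finset.mul_sum]
      rw [integral_finsetSum]
      · refine Finset.sum_congr rfl fun k _ => ?_
        rw [← integral_weight_mul_monomial hk k, ← integral_const_mul]
        congr 1 with u; ring
      · intro k _
        exact integrable_weight_mul hp h1 (f := fun x => P.coeff k * x ^ k) (by fun_prop)
    rw [key ν hνpos hν1 hνint]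
    simp_rw [fun i => key (N i) (hNpos i) (hN1 i) (hNint i)]
    exact tendsto_finsetSum _ fun k _ => ((hlim _).sub (hlim _)).const_mul _
  set L := ∫ u, (1 - Real.exp (-u)) ∂ν with hL
  have hL0 : 0 ≤ L := integral_nonneg_of_ae (by
    filter_upwards [hνpos] with u hu
    have : Real.exp (-u) ≤ 1 := Real.exp_le_one_iff.2 (by linarith)
    simpa using this)
  rw [Metric.tendsto_nhds]
  intro ε hε
  have hδ : 0 < ε / (3 * (L + 1)) := by positivity
  obtain ⟨P, hP⟩ := exists_polynomial_near_of_continuousOn 0 1 f hf.continuousOn _ hδ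
  filter_upwards [Metric.tendsto_nhds.1 (hpoly P) (ε / 3) (by positivity),
    hlim1.eventually_lt_const (show L < L + 1 by linarith)] with i hi1 hi2
  have e1 := abs_integral_weight_sub_le (hNpos i) (hN1 i) hf P.continuous hP
  have e2 := abs_integral_weight_sub_le hνpos hν1 hf P.continuous hP
  have b1 : ε / (3 * (L + 1)) * ∫ u, (1 - Real.exp (-u)) ∂N i ≤ ε / 3 := by
    calc _ ≤ ε / (3 * (L + 1)) * (L + 1) := by gcongr
      _ = ε / 3 := by field_simp
  have b2 : ε / (3 * (L + 1)) * L < ε / 3 := by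
    calc _ < ε / (3 * (L + 1)) * (L + 1) := by gcongr; linarith
      _ = ε / 3 := by field_simp
  rw [Real.dist_eq] at hi1 ⊢
  rw [abs_lt] at *
  rw [abs_le] at e1 e2
  constructor <;> linarith [e1.1, e1.2, e2.1, e2.2, hi1.1, hi1.2]

lemma continuous_comp_neg_log {g : ℝ → ℝ} (hg : Continuous g) (hg0 : Tendsto g atTop (𝓝 0)) :
    Continuous (fun x => if x ≤ 0 then 0 else g (-Real.log x)) := by
  rw [continuous_iff_continuousAt]
  intro x
  rcases lt_trichotomy x 0 with hx | rfl | hx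
  · refine (continuousAt_const (y := (0:ℝ))).congr ?_
    filter_upwards [gt_mem_nhds hx] with y hy
    simp [hy.le]
  · rw [continuousAt_iff_continuous_left'_right']
    constructor
    · refine (continuousWithinAt_const (b := (0:ℝ))).congr ?_ (by simp)
      intro y hy
      have : y ≤ 0 := le_of_lt hy
      simp [this]
    · have h : Tendsto (fun x => g (-Real.log x)) (𝓝[>] 0) (𝓝 0) :=
        hg0.comp (tendsto_neg_atBot_atTop.comp Real.tendsto_log_nhdsGT_zero)
      unfold ContinuousWithinAt
      simp only [le_refl, if_true]
      refine h.congr' ?_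
      filter_upwards [self_mem_nhdsWithin] with y hy
      simp [not_le.2 (mem_Ioi.1 hy)]
  · have : ContinuousAt (fun y => g (-Real.log y)) x :=
      hg.continuousAt.comp (Real.continuousAt_log hx.ne').neg
    refine this.congr ?_
    filter_upwards [lt_mem_nhds hx] with y hy
    simp [not_le.2 hy]

/-- The continuous piecewise linear function equal to `0` on `(-∞, a]` and to `1` on `[b, ∞)`. -/
noncomputable def ramp (a b u : ℝ) : ℝ := max 0 (min 1 ((u - a) / (b - a)))

lemma ramp_nonneg (a b u : ℝ) : 0 ≤ ramp a b u := le_max_left _ _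

lemma ramp_le_one (a b u : ℝ) : ramp a b u ≤ 1 := max_le zero_le_one (min_le_left _ _)

lemma ramp_of_le {a b u : ℝ} (hab : a < b) (h : u ≤ a) : ramp a b u = 0 := by
  refine max_eq_left ((min_le_right _ _).trans ?_)
  exact div_nonpos_of_nonpos_of_nonneg (by linarith) (by linarith)

lemma ramp_of_ge {a b u : ℝ} (hab : a < b) (h : b ≤ u) : ramp a b u = 1 := by
  have : 1 ≤ (u - a) / (b - a) := by rw [le_div_iff₀ (by linarith)]; linarith
  simp [ramp, min_eq_left this]

lemma continuous_ramp (a b : ℝ) : Continuous (ramp a b) := by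
  unfold ramp; fun_prop

/-- Vague convergence tested on the functions `ramp a b u * u⁻ᵖ`, which are continuous, vanish near
`0` and tend to `0` at infinity. -/
lemma tendsto_lintegral_ramp (hNpos : ∀ i, ∀ᵐ u ∂N i, 0 < u) (hνpos : ∀ᵐ u ∂ν, 0 < u)
    (hNint : ∀ i, ∀ k : ℕ, Integrable (fun u => 1 - Real.exp (-(k * u))) (N i))
    (hνint : ∀ k : ℕ, Integrable (fun u => 1 - Real.exp (-(k * u))) ν)
    (hlim : ∀ k : ℕ, Tendsto (fun i => ∫ u, (1 - Real.exp (-(k * u))) ∂N i) l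
      (𝓝 (∫ u, (1 - Real.exp (-(k * u))) ∂ν)))
    {a b p : ℝ} (ha : 0 < a) (hab : a < b) (hp : 0 < p) :
    Tendsto (fun i => ∫⁻ u, ENNReal.ofReal (ramp a b u * u ^ (-p)) ∂N i) l
      (𝓝 (∫⁻ u, ENNReal.ofReal (ramp a b u * u ^ (-p)) ∂ν)) := by
  -- `max u a` agrees with `u` wherever the ramp is nonzero and avoids the singularity at `0`
  set g : ℝ → ℝ := fun u => ramp a b u * (max u a) ^ (-p) / (1 - Real.exp (-(max u a))) with hg
  have hm : ∀ u, 0 < max u a := fun u => lt_of_lt_of_le ha (le_max_right _ _)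
  have hden : ∀ u, 0 < 1 - Real.exp (-(max u a)) := fun u => by
    have : Real.exp (-(max u a)) < 1 := Real.exp_lt_one_iff.2 (by linarith [hm u])
    linarith
  have hgc : Continuous g := by
    refine ((continuous_ramp a b).mul ?_).div (by fun_prop) fun u => (hden u).ne'
    exact (by fun_prop : Continuous fun u => max u a).rpow_const fun u => Or.inl (hm u).ne'
  have hg0 : Tendsto g atTop (𝓝 0) := by
    have h1 : Tendsto (fun u : ℝ => u ^ (-p) / (1 - Real.exp (-a))) atTop (𝓝 0) := by
      simpa using (tendsto_rpow_neg_atTop hp).div_const (1 - Real.exp (-a))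
    refine squeeze_zero' (Eventually.of_forall fun u => ?_) ?_ h1
    · exact div_nonneg (mul_nonneg (ramp_nonneg _ _ _) (Real.rpow_nonneg (hm u).le _)) (hden u).le
    · filter_upwards [eventually_ge_atTop a] with u hu
      have hda := hden a
      rw [max_self] at hda
      have hu0 : 0 < u := ha.trans_le hu
      simp only [hg, max_eq_left hu]
      gcongr
      exact mul_le_of_le_one_left (Real.rpow_nonneg hu0.le _) (ramp_le_one _ _ _)
  set h : ℝ → ℝ := fun x => if x ≤ 0 then 0 else g (-Real.log x) with hh
  have hhc : Continuous h := continuous_comp_neg_log hgc hg0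
  have heq : ∀ u : ℝ, ramp a b u * u ^ (-p) = (1 - Real.exp (-u)) * h (Real.exp (-u)) := by
    intro u
    simp only [hh, not_le.2 (Real.exp_pos _), if_false, Real.log_exp, neg_neg, hg]
    rcases le_total u a with hu | hu
    · simp [ramp_of_le hab hu]
    · have := hden u
      rw [max_eq_left hu] at *
      field_simp
  have conv : ∀ ρ : Measure ℝ, (∀ᵐ u ∂ρ, 0 < u) →
      (∀ k : ℕ, Integrable (fun u => 1 - Real.exp (-(k * u))) ρ) →
      ∫⁻ u, ENNReal.ofReal (ramp a b u * u ^ (-p)) ∂ρ =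
        ENNReal.ofReal (∫ u, (1 - Real.exp (-u)) * h (Real.exp (-u)) ∂ρ) := by
    intro ρ hpos hint
    rw [ofReal_integral_eq_lintegral_ofReal
      (integrable_weight_mul hpos (by simpa using hint 1) hhc)]
    · simp_rw [heq]
    · filter_upwards [hpos] with u hu
      rw [← heq]
      exact mul_nonneg (ramp_nonneg _ _ _) (Real.rpow_nonneg hu.le _)
  rw [conv ν hνpos hνint]
  simp_rw [fun i => conv (N i) (hNpos i) (hNint i)]
  exact (ENNReal.continuous_ofReal.tendsto _).comp
    (tendsto_integral_weight hNpos hνpos hNint hνint hlim hhc)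

/-- Half-lines are continuity sets: sandwich the indicator of `U` between two ramps and use that the
weighted tail of `ν` is a continuous function of the end point. -/
lemma tendsto_lintegral_halfLine (hNpos : ∀ i, ∀ᵐ u ∂N i, 0 < u) (hνpos : ∀ᵐ u ∂ν, 0 < u)
    (hNint : ∀ i, ∀ k : ℕ, Integrable (fun u => 1 - Real.exp (-(k * u))) (N i))
    (hνint : ∀ k : ℕ, Integrable (fun u => 1 - Real.exp (-(k * u))) ν)
    (hlim : ∀ k : ℕ, Tendsto (fun i => ∫ u, (1 - Real.exp (-(k * u))) ∂N i) l
      (𝓝 (∫ u, (1 - Real.exp (-(k * u))) ∂ν)))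
    {p q K : ℝ} (hp : 0 < p)
    (htail : ∀ c, 0 < c → ∫⁻ u in Ici c, ENNReal.ofReal (u ^ (-p)) ∂ν
      = ENNReal.ofReal (K * c ^ (-q)))
    {c : ℝ} (hc : 0 < c) {U : Set ℝ} (hU1 : Ioi c ⊆ U) (hU2 : U ⊆ Ici c) (hUm : MeasurableSet U) :
    Tendsto (fun i => ∫⁻ u in U, ENNReal.ofReal (u ^ (-p)) ∂N i) l
      (𝓝 (ENNReal.ofReal (K * c ^ (-q)))) := by
  have hup : ∀ (ρ : Measure ℝ) (a b : ℝ) (V : Set ℝ), MeasurableSet V → a < b → V ⊆ Ici b →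
      ∫⁻ u in V, ENNReal.ofReal (u ^ (-p)) ∂ρ
        ≤ ∫⁻ u, ENNReal.ofReal (ramp a b u * u ^ (-p)) ∂ρ := by
    intro ρ a b V hV hab hVb
    rw [← lintegral_indicator hV]
    refine lintegral_mono fun u => ?_
    by_cases hu : u ∈ V
    · simp [hu, ramp_of_ge hab (hVb hu)]
    · simp [hu]
  have hlow : ∀ (ρ : Measure ℝ) (a b : ℝ) (V : Set ℝ), MeasurableSet V → 0 < a → a < b →
      Ioi a ⊆ V → ∫⁻ u, ENNReal.ofReal (ramp a b u * u ^ (-p)) ∂ρ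
        ≤ ∫⁻ u in V, ENNReal.ofReal (u ^ (-p)) ∂ρ := by
    intro ρ a b V hV ha hab hVa
    rw [← lintegral_indicator hV]
    refine lintegral_mono fun u => ?_
    rcases le_or_gt u a with hu | hu
    · simp [ramp_of_le hab hu]
    · rw [indicator_of_mem (hVa hu)]
      exact ENNReal.ofReal_le_ofReal (mul_le_of_le_one_left
        (Real.rpow_nonneg (ha.trans hu).le _) (ramp_le_one _ _ _))
  have hcont : ContinuousAt (fun c : ℝ => ENNReal.ofReal (K * c ^ (-q))) c :=
    ENNReal.continuous_ofReal.continuousAt.comp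
      (continuousAt_const.mul (Real.continuousAt_rpow_const _ _ (Or.inl hc.ne')))
  rw [tendsto_order]
  constructor
  · intro z hz
    obtain ⟨b, hcb, hb⟩ : ∃ b, c < b ∧ z < ENNReal.ofReal (K * b ^ (-q)) := by
      have h1 := (hcont.tendsto.eventually_const_lt hz).filter_mono
        (nhdsWithin_le_nhds (s := Ioi c))
      obtain ⟨b, hb1, hb2⟩ := (h1.and self_mem_nhdsWithin).exists
      exact ⟨b, hb2, hb1⟩
    rw [← htail b (hc.trans hcb)] at hb
    have hb' := hb.trans_le (hup ν c b _ measurableSet_Ici hcb subset_rfl)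
    filter_upwards [(tendsto_lintegral_ramp hNpos hνpos hNint hνint hlim hc hcb hp
      ).eventually_const_lt hb'] with i hi
    exact hi.trans_le (hlow _ c b U hUm hc hcb hU1)
  · intro z hz
    obtain ⟨a, ha0, hac, ha⟩ : ∃ a, 0 < a ∧ a < c ∧ ENNReal.ofReal (K * a ^ (-q)) < z := by
      have h1 := (hcont.tendsto.eventually_lt_const hz).filter_mono
        (nhdsWithin_le_nhds (s := Iio c))
      have h2 := (lt_mem_nhds hc).filter_mono (nhdsWithin_le_nhds (s := Iio c))
      obtain ⟨a, ⟨ha1, ha2⟩, ha3⟩ := ((h1.and h2).and self_mem_nhdsWithin).exists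
      exact ⟨a, ha2, ha3, ha1⟩
    rw [← htail a ha0] at ha
    have ha' := (hlow ν a c _ measurableSet_Ici ha0 hac Ioi_subset_Ici_self).trans_lt ha
    filter_upwards [(tendsto_lintegral_ramp hNpos hνpos hNint hνint hlim ha0 hac hp
      ).eventually_lt_const ha'] with i hi
    exact (hup _ a c U hUm hac hU2).trans_lt hi

end Vague

/-! ### Layer-cake formula and dominated convergence -/

section LayerCake

variable {ι : Type*} {l : Filter ι} {N : ι → Measure ℝ} {ν : Measure ℝ}

/-- The layer-cake formula in the factor `Φ`, with weight `u⁻ᵖ`. -/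
lemma lintegral_layer {ρ : Measure ℝ} [SFinite ρ] {Φ : ℝ → ℝ} (hΦ : Measurable Φ) (p : ℝ) :
    ∫⁻ u in Ioi 0, ENNReal.ofReal (u ^ (-p)) * ENNReal.ofReal (Φ u) ∂ρ =
      ∫⁻ a in Ioi (0:ℝ), ∫⁻ u in {u | 0 < u ∧ a < Φ u}, ENNReal.ofReal (u ^ (-p)) ∂ρ := by
  have hw : Measurable fun u : ℝ => ENNReal.ofReal (u ^ (-p)) := by fun_prop
  have hset : ∀ a, MeasurableSet {u : ℝ | a < Φ u} := fun a => measurableSet_lt (by fun_prop) hΦ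
  have h1 : ∀ u : ℝ, ENNReal.ofReal (u ^ (-p)) * ENNReal.ofReal (Φ u) =
      ∫⁻ a in Ioi (0:ℝ), {x : ℝ × ℝ | x.2 < Φ x.1}.indicator
        (fun x => ENNReal.ofReal (x.1 ^ (-p))) (u, a) := by
    intro u
    have : ∀ a, {x : ℝ × ℝ | x.2 < Φ x.1}.indicator
        (fun x => ENNReal.ofReal (x.1 ^ (-p))) (u, a) =
        (Iio (Φ u)).indicator (fun _ => ENNReal.ofReal (u ^ (-p))) a := by
      intro a; simp [indicator]
    simp_rw [this]
    rw [lintegral_indicator measurableSet_Iio, setLIntegral_const,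
      Measure.restrict_apply measurableSet_Iio, inter_comm, Ioi_inter_Iio, Real.volume_Ioo,
      sub_zero]
  have hms : MeasurableSet {x : ℝ × ℝ | x.2 < Φ x.1} :=
    measurableSet_lt measurable_snd (hΦ.comp measurable_fst)
  simp_rw [h1]
  rw [lintegral_lintegral_swap (f := fun u a => {x : ℝ × ℝ | x.2 < Φ x.1}.indicator
        (fun x => ENNReal.ofReal (x.1 ^ (-p))) (u, a))
    (((hw.comp measurable_fst).indicator hms).aemeasurable)]
  refine lintegral_congr fun a => ?_
  have : ∀ u, {x : ℝ × ℝ | x.2 < Φ x.1}.indicator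
        (fun x => ENNReal.ofReal (x.1 ^ (-p))) (u, a) =
        {u | a < Φ u}.indicator (fun u => ENNReal.ofReal (u ^ (-p))) u := by
    intro u; simp [indicator]
  simp_rw [this]
  rw [lintegral_indicator (hset a), Measure.restrict_restrict (hset a)]
  congr 2
  ext u; simp [and_comm]

lemma measurable_layer {ρ : Measure ℝ} [SFinite ρ] {Φ : ℝ → ℝ} (hΦ : Measurable Φ) (p : ℝ) :
    Measurable fun a => ∫⁻ u in {u | 0 < u ∧ a < Φ u}, ENNReal.ofReal (u ^ (-p)) ∂ρ := by
  have hms : MeasurableSet {x : ℝ × ℝ | 0 < x.2 ∧ x.1 < Φ x.2} :=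
    (measurableSet_lt measurable_const measurable_snd).inter
      (measurableSet_lt measurable_fst (hΦ.comp measurable_snd))
  have hw : Measurable fun x : ℝ × ℝ => ENNReal.ofReal (x.2 ^ (-p)) := by fun_prop
  have := (hw.indicator hms).lintegral_prod_right' (ν := ρ)
  convert this using 2 with a
  rw [← lintegral_indicator (s := {u | 0 < u ∧ a < Φ u})
    ((measurableSet_lt measurable_const measurable_id).inter
      (measurableSet_lt measurable_const hΦ))]
  rfl

/-- An up-closed subset of `(0, ∞)` is empty, everything, or a half-line. -/
lemma upperSet_cases {U : Set ℝ} (hU : U ⊆ Ioi 0) (hup : ∀ u ∈ U, ∀ v, u ≤ v → v ∈ U) :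
    U = ∅ ∨ U = Ioi 0 ∨ ∃ c, 0 < c ∧ Ioi c ⊆ U ∧ U ⊆ Ici c := by
  rcases U.eq_empty_or_nonempty with h | hne
  · exact Or.inl h
  right
  have hbdd : BddBelow U := ⟨0, fun u hu => (hU hu).le⟩
  have h1 : Ioi (sInf U) ⊆ U := by
    intro v hv
    obtain ⟨u, hu, huv⟩ := (csInf_lt_iff hbdd hne).1 hv
    exact hup u hu v huv.le
  have h2 : U ⊆ Ici (sInf U) := fun u hu => csInf_le hbdd hu
  rcases (le_csInf hne fun u hu => (hU hu).le : 0 ≤ sInf U).eq_or_lt with h0 | h0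
  · left
    rw [← h0] at h1
    exact hU.antisymm h1
  · exact Or.inr ⟨_, h0, h1, h2⟩

/-- Convergence of `∫ u⁻ᵖ Φ(u)` for increasing `Φ`: convergence and domination on half-lines pass
through the layer-cake formula by dominated convergence in the level. -/
lemma tendsto_lintegral_of_halfLines [l.IsCountablyGenerated] [∀ i, SFinite (N i)] [SFinite ν]
    {p q K : ℝ} {C : ENNReal} (hC : C ≠ ⊤) (hK : 0 < K) (hq : 0 < q)
    (htail : ∀ c, 0 < c → ∀ U, Ioi c ⊆ U → U ⊆ Ici c →
      ∫⁻ u in U, ENNReal.ofReal (u ^ (-p)) ∂ν = ENNReal.ofReal (K * c ^ (-q)))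
    (hbound : ∀ i, ∀ c, 0 < c → ∫⁻ u in Ici c, ENNReal.ofReal (u ^ (-p)) ∂N i
      ≤ C * ENNReal.ofReal (K * c ^ (-q)))
    (hconv : ∀ c, 0 < c → ∀ U, MeasurableSet U → Ioi c ⊆ U → U ⊆ Ici c →
      Tendsto (fun i => ∫⁻ u in U, ENNReal.ofReal (u ^ (-p)) ∂N i) l
        (𝓝 (ENNReal.ofReal (K * c ^ (-q)))))
    {Φ : ℝ → ℝ} (hΦ : Measurable Φ) (hmono : ∀ u v, 0 < u → u ≤ v → Φ u ≤ Φ v)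
    (hfin : ∫⁻ u in Ioi 0, ENNReal.ofReal (u ^ (-p)) * ENNReal.ofReal (Φ u) ∂ν ≠ ⊤) :
    Tendsto (fun i => ∫⁻ u in Ioi 0, ENNReal.ofReal (u ^ (-p)) * ENNReal.ofReal (Φ u) ∂N i) l
      (𝓝 (∫⁻ u in Ioi 0, ENNReal.ofReal (u ^ (-p)) * ENNReal.ofReal (Φ u) ∂ν)) := by
  have htop : ∫⁻ u in Ioi 0, ENNReal.ofReal (u ^ (-p)) ∂ν = ⊤ := by
    have h1 : Tendsto (fun c : ℝ => ENNReal.ofReal (K * c ^ (-q))) (𝓝[>] 0) (𝓝 ⊤) :=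
      ENNReal.tendsto_ofReal_nhds_top.2
        ((tendsto_rpow_neg_nhdsGT_zero (by linarith)).const_mul_atTop hK)
    refine top_unique (le_of_tendsto h1 ?_)
    filter_upwards [self_mem_nhdsWithin] with c hc
    rw [← htail c hc (Ioi c) subset_rfl Ioi_subset_Ici_self]
    exact lintegral_mono_set (Ioi_subset_Ioi (le_of_lt hc))
  simp_rw [lintegral_layer hΦ] at hfin ⊢
  have hcases : ∀ a : ℝ, ∫⁻ u in {u | 0 < u ∧ a < Φ u}, ENNReal.ofReal (u ^ (-p)) ∂ν < ⊤ →
      {u | 0 < u ∧ a < Φ u} = ∅ ∨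
        ∃ c, 0 < c ∧ Ioi c ⊆ {u | 0 < u ∧ a < Φ u} ∧ {u | 0 < u ∧ a < Φ u} ⊆ Ici c := by
    intro a ha
    rcases upperSet_cases (U := {u | 0 < u ∧ a < Φ u}) (fun u hu => hu.1)
      (fun u hu v huv => ⟨hu.1.trans_le huv, hu.2.trans_le (hmono u v hu.1 huv)⟩) with h | h | h
    · exact Or.inl h
    · rw [h, htop] at ha
      exact absurd ha (lt_irrefl _)
    · exact Or.inr h
  have hae := ae_lt_top (measurable_layer (ρ := ν) hΦ p) hfin
  refine tendsto_lintegral_filter_of_dominated_convergence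
    (fun a => C * ∫⁻ u in {u | 0 < u ∧ a < Φ u}, ENNReal.ofReal (u ^ (-p)) ∂ν)
    (Eventually.of_forall fun i => measurable_layer hΦ p) (Eventually.of_forall fun i => ?_) ?_ ?_
  · filter_upwards [hae] with a ha
    rcases hcases a ha with h | ⟨c, hc, h1, h2⟩
    · simp [h]
    · rw [htail c hc _ h1 h2]
      exact (lintegral_mono_set h2).trans (hbound i c hc)
  · rw [lintegral_const_mul _ (measurable_layer hΦ p)]
    exact ENNReal.mul_ne_top hC hfin
  · filter_upwards [hae] with a ha
    rcases hcases a ha with h | ⟨c, hc, h1, h2⟩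
    · simp [h, tendsto_const_nhds]
    · rw [htail c hc _ h1 h2]
      exact hconv c hc _ ((measurableSet_lt measurable_const measurable_id).inter
        (measurableSet_lt measurable_const hΦ)) h1 h2

end LayerCake

/-! ### The stable subordinator and its Lévy measure -/

section Stable

/-- The law of `S / x` multiplied by the mass `x ^ β`, where `S` has law `μ`. -/
noncomputable def scaledLaw (μ : Measure ℝ) (β x : ℝ) : Measure ℝ :=
  (x ^ β).toNNReal • μ.map (fun s => s / x)

/-- The Lévy measure `β / Γ(1 - β) u^(-1-β) du` on `(0, ∞)` of the `β`-stable subordinator. -/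
noncomputable def stableLevy (β : ℝ) : Measure ℝ :=
  (volume.restrict (Ioi 0)).withDensity
    fun u => ENNReal.ofReal (β / Real.Gamma (1 - β) * u ^ (-1 - β))

instance (μ : Measure ℝ) [IsProbabilityMeasure μ] (β x : ℝ) : IsFiniteMeasure (scaledLaw μ β x) := by
  unfold scaledLaw; infer_instance

instance (β : ℝ) : SFinite (stableLevy β) := by
  unfold stableLevy; infer_instance

variable {μ : Measure ℝ} {β : ℝ}

lemma stableLevy_pos (β : ℝ) : ∀ᵐ u ∂stableLevy β, 0 < u :=
  (withDensity_absolutelyContinuous _ _).ae_le (ae_restrict_mem measurableSet_Ioi)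

lemma scaledLaw_pos (hsupp : μ (Iic 0) = 0) {x : ℝ} (hx : 0 < x) :
    ∀ᵐ u ∂scaledLaw μ β x, 0 < u := by
  have h : ∀ᵐ s ∂μ, 0 < s := by
    rw [ae_iff]; simpa [Iic_def] using hsupp
  refine Measure.ae_smul_measure ?_ _
  rw [ae_map_iff (by fun_prop) measurableSet_Ioi]
  filter_upwards [h] with s hs
  positivity

lemma integral_scaledLaw {x : ℝ} (hx : 0 < x) (f : ℝ → ℝ) :
    ∫ u, f u ∂scaledLaw μ β x = x ^ β * ∫ s, f (s / x) ∂μ := by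
  have he : MeasurableEmbedding fun s : ℝ => s / x := by
    simpa [div_eq_mul_inv] using
      (Homeomorph.mulRight₀ x⁻¹ (inv_ne_zero hx.ne')).measurableEmbedding
  rw [scaledLaw, integral_smul_nnreal_measure, he.integral_map, NNReal.smul_def,
    Real.coe_toNNReal _ (Real.rpow_nonneg hx.le _), smul_eq_mul]

lemma lintegral_stableLevy {f : ℝ → ENNReal} (hf : Measurable f) (s : Set ℝ)
    (hs : MeasurableSet s) : ∫⁻ u in s, f u ∂stableLevy β = ∫⁻ u in s ∩ Ioi 0,
      ENNReal.ofReal (β / Real.Gamma (1 - β) * u ^ (-1 - β)) * f u := by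
  rw [stableLevy, restrict_withDensity hs, Measure.restrict_restrict hs,
    lintegral_withDensity_eq_lintegral_mul _ (by fun_prop) hf]
  rfl

lemma integrable_laplace_scaledLaw [IsProbabilityMeasure μ] (hsupp : μ (Iic 0) = 0) {x : ℝ}
    (hx : 0 < x) {r : ℝ} (hr : 0 ≤ r) :
    Integrable (fun u => 1 - Real.exp (-(r * u))) (scaledLaw μ β x) := by
  refine Integrable.of_bound (C := 1) (by fun_prop) ?_
  filter_upwards [scaledLaw_pos hsupp hx] with u hu
  have h1 : Real.exp (-(r * u)) ≤ 1 := Real.exp_le_one_iff.2 (by nlinarith)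
  rw [Real.norm_eq_abs, abs_le]
  constructor <;> linarith [Real.exp_pos (-(r * u))]

lemma laplace_scaledLaw [IsProbabilityMeasure μ] (hsupp : μ (Iic 0) = 0) (hβ : 0 < β)
    (hlap : ∀ r : ℝ, 0 < r →
      ∫ s in Ioi (0:ℝ), Real.exp (-(r * s)) ∂μ = Real.exp (-(r ^ β)))
    {x : ℝ} (hx : 0 < x) {r : ℝ} (hr : 0 ≤ r) :
    ∫ u, (1 - Real.exp (-(r * u))) ∂scaledLaw μ β x =
      x ^ β * (1 - Real.exp (-(r ^ β * x ^ (-β)))) := by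
  have h : ∀ᵐ s ∂μ, 0 < s := by
    rw [ae_iff]; simpa [Iic_def] using hsupp
  rw [integral_scaledLaw hx]
  congr 1
  rw [integral_sub (integrable_const _)]
  · simp only [integral_const, probReal_univ, smul_eq_mul, mul_one]
    congr 1
    rcases hr.eq_or_lt with rfl | hr
    · simp [Real.zero_rpow hβ.ne']
    · have := hlap (r / x) (by positivity)
      rw [Measure.restrict_eq_self_of_ae_mem (s := Ioi 0) h] at this
      rw [Real.rpow_neg hx.le, ← div_eq_mul_inv, ← Real.div_rpow hr.le hx.le, ← this]
      congr 1 with s; congr 2; ring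
  · refine Integrable.of_bound (C := 1) (by fun_prop) ?_
    filter_upwards [h] with s hs
    rw [Real.norm_eq_abs, abs_of_pos (Real.exp_pos _), Real.exp_le_one_iff]
    have : 0 ≤ r * (s / x) := by positivity
    linarith

lemma tendsto_laplace (hβ : 0 < β) (z : ℝ) :
    Tendsto (fun x : ℝ => x ^ β * (1 - Real.exp (-(z * x ^ (-β))))) atTop (𝓝 z) := by
  have hd : HasDerivAt (fun y : ℝ => 1 - Real.exp (-(z * y))) z 0 := by
    have := (((hasDerivAt_id (0:ℝ)).const_mul z).neg.exp).const_sub 1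
    simpa using this
  have h1 := hasDerivAt_iff_tendsto_slope_zero.1 hd
  have h2 : Tendsto (fun x : ℝ => x ^ (-β)) atTop (𝓝[≠] 0) := by
    refine tendsto_nhdsWithin_iff.2 ⟨tendsto_rpow_neg_atTop hβ, ?_⟩
    filter_upwards [eventually_gt_atTop 0] with x hx
    exact (Real.rpow_pos_of_pos hx _).ne'
  refine (h1.comp h2).congr' ?_
  filter_upwards [eventually_gt_atTop 0] with x hx
  simp [Real.rpow_neg hx.le]

/-- The Lévy–Khintchine formula `∫ (1 - e^{-ru}) β / Γ(1-β) u^{-1-β} du = r ^ β`, obtained by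
writing `1 - e^{-ru} = ∫₀ʳ u e^{-vu} dv`, exchanging the integrals and using Euler's integral. -/
lemma lintegral_laplace_stableLevy (hβ0 : 0 < β) (hβ1 : β < 1) {r : ℝ} (hr : 0 ≤ r) :
    ∫⁻ u, ENNReal.ofReal (1 - Real.exp (-(r * u))) ∂stableLevy β = ENNReal.ofReal (r ^ β) := by
  have hG : 0 < Real.Gamma (1 - β) := Real.Gamma_pos_of_pos (by linarith)
  have hk : 0 < β / Real.Gamma (1 - β) := by positivity
  rw [← setLIntegral_univ, lintegral_stableLevy (by fun_prop) _ MeasurableSet.univ, univ_inter]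
  have h1 : ∀ u ∈ Ioi (0:ℝ), ENNReal.ofReal (β / Real.Gamma (1 - β) * u ^ (-1 - β)) *
      ENNReal.ofReal (1 - Real.exp (-(r * u))) =
      ∫⁻ v in Ioc 0 r, ENNReal.ofReal (β / Real.Gamma (1 - β) * (u ^ (-β) * Real.exp (-(v * u)))) := by
    intro u hu
    have hu0 : (0:ℝ) < u := hu
    have hup : 0 < u ^ (-β) := Real.rpow_pos_of_pos hu0 _
    rw [← ofReal_integral_eq_lintegral_ofReal, ← ENNReal.ofReal_mul (by positivity)]
    · congr 1
      rw [← intervalIntegral.integral_of_le hr, intervalIntegral.integral_const_mul,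
        intervalIntegral.integral_const_mul]
      have hint : ∫ v in (0:ℝ)..r, Real.exp (-(v * u)) = (1 - Real.exp (-(r * u))) / u := by
        have hder : ∀ v ∈ uIcc 0 r,
            HasDerivAt (fun v : ℝ => -Real.exp (-(v * u)) / u) (Real.exp (-(v * u))) v := by
          intro v _
          have := (((hasDerivAt_id v).mul_const u).neg.exp).neg.div_const u
          refine this.congr_deriv ?_
          simp
          field_simp
        rw [intervalIntegral.integral_eq_sub_of_hasDerivAt hder
          (Continuous.intervalIntegrable (by fun_prop) _ _)]
        simp; ring
      rw [hint, show -1 - β = -β - 1 by ring, Real.rpow_sub_one hu0.ne']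
      ring
    · exact (Continuous.integrableOn_Icc (by fun_prop)).mono_set Ioc_subset_Icc_self
    · exact Eventually.of_forall fun v => by
        have := Real.exp_pos (-(v * u))
        show 0 ≤ _
        positivity
  rw [setLIntegral_congr_fun measurableSet_Ioi h1, lintegral_lintegral_swap (by fun_prop)]
  have h2 : ∀ v ∈ Ioc 0 r, ∫⁻ u in Ioi (0:ℝ),
      ENNReal.ofReal (β / Real.Gamma (1 - β) * (u ^ (-β) * Real.exp (-(v * u)))) =
      ENNReal.ofReal (β * v ^ (β - 1)) := by
    intro v hv
    have hv0 : 0 < v := hv.1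
    have hint := Real.integral_rpow_mul_exp_neg_mul_Ioi (a := 1 - β) (by linarith) hv0
    rw [show 1 - β - 1 = -β by ring] at hint
    have hval : 0 < (1 / v) ^ (1 - β) * Real.Gamma (1 - β) := by positivity
    rw [← ofReal_integral_eq_lintegral_ofReal, integral_const_mul, hint]
    · congr 1
      rw [one_div, Real.inv_rpow hv0.le, ← Real.rpow_neg hv0.le, show -(1 - β) = β - 1 by ring]
      field_simp
    · refine Integrable.const_mul ?_ _
      by_contra hn
      rw [integral_undef hn] at hint
      linarith
    · filter_upwards [ae_restrict_mem measurableSet_Ioi] with u hu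
      have hu0 : (0:ℝ) < u := hu
      have := Real.exp_pos (-(v * u))
      show 0 ≤ _
      positivity
  rw [setLIntegral_congr_fun measurableSet_Ioc h2, ← ofReal_integral_eq_lintegral_ofReal]
  · congr 1
    rw [← intervalIntegral.integral_of_le hr, intervalIntegral.integral_const_mul,
      integral_rpow (Or.inl (by linarith))]
    simp [Real.zero_rpow hβ0.ne']
    field_simp
  · refine Integrable.const_mul ?_ _
    have := (intervalIntegral.intervalIntegrable_rpow' (a := 0) (b := r)
      (show -1 < β - 1 by linarith)).1
    exact this
  · filter_upwards [ae_restrict_mem measurableSet_Ioc] with v hv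
    have := hv.1
    show 0 ≤ _
    positivity

lemma laplace_stableLevy (hβ0 : 0 < β) (hβ1 : β < 1) {r : ℝ} (hr : 0 ≤ r) :
    Integrable (fun u => 1 - Real.exp (-(r * u))) (stableLevy β) ∧
      ∫ u, (1 - Real.exp (-(r * u))) ∂stableLevy β = r ^ β := by
  have hn : 0 ≤ᵐ[stableLevy β] fun u => 1 - Real.exp (-(r * u)) := by
    filter_upwards [stableLevy_pos β] with u hu
    have : Real.exp (-(r * u)) ≤ 1 := Real.exp_le_one_iff.2 (by nlinarith)
    simpa using this
  have hl := lintegral_laplace_stableLevy hβ0 hβ1 hr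
  refine ⟨(lintegral_ofReal_ne_top_iff_integrable (by fun_prop) hn).1 (by simp [hl]), ?_⟩
  rw [integral_eq_lintegral_of_nonneg_ae hn (by fun_prop), hl,
    ENNReal.toReal_ofReal (Real.rpow_nonneg hr _)]

lemma stableLevy_tail (hβ0 : 0 < β) (hβ1 : β < 1) {p : ℝ} (hp : 0 < p) {c : ℝ} (hc : 0 < c)
    {U : Set ℝ} (hU1 : Ioi c ⊆ U) (hU2 : U ⊆ Ici c) :
    ∫⁻ u in U, ENNReal.ofReal (u ^ (-p)) ∂stableLevy β =
      ENNReal.ofReal (β / Real.Gamma (1 - β) / (p + β) * c ^ (-(p + β))) := by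
  have hG : 0 < Real.Gamma (1 - β) := Real.Gamma_pos_of_pos (by linarith)
  have key : ∀ V : Set ℝ, MeasurableSet V → V =ᵐ[volume] Ioi c → V ⊆ Ioi 0 →
      ∫⁻ u in V, ENNReal.ofReal (u ^ (-p)) ∂stableLevy β =
      ENNReal.ofReal (β / Real.Gamma (1 - β) / (p + β) * c ^ (-(p + β))) := by
    intro V hV hVc hV0
    rw [lintegral_stableLevy (by fun_prop) _ hV, inter_eq_left.2 hV0, setLIntegral_congr hVc]
    have h1 : ∀ u ∈ Ioi c, ENNReal.ofReal (β / Real.Gamma (1 - β) * u ^ (-1 - β)) *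
        ENNReal.ofReal (u ^ (-p)) =
        ENNReal.ofReal (β / Real.Gamma (1 - β) * u ^ (-1 - β - p)) := by
      intro u hu
      have hu0 : 0 < u := hc.trans hu
      rw [← ENNReal.ofReal_mul (by positivity), mul_assoc, ← Real.rpow_add hu0]
      rfl
    rw [setLIntegral_congr_fun measurableSet_Ioi h1, ← ofReal_integral_eq_lintegral_ofReal,
      integral_const_mul, integral_Ioi_rpow_of_lt (by linarith) hc]
    · congr 1
      rw [show -1 - β - p + 1 = -(p + β) by ring]
      field_simp
    · exact (integrableOn_Ioi_rpow_of_lt (by linarith) hc).const_mul _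
    · filter_upwards [ae_restrict_mem measurableSet_Ioi] with u hu
      have hu0 : 0 < u := hc.trans hu
      show 0 ≤ _
      positivity
  refine le_antisymm ((lintegral_mono_set hU2).trans ?_) (le_trans ?_ (lintegral_mono_set hU1))
  · exact (key _ measurableSet_Ici Ioi_ae_eq_Ici.symm (Ici_subset_Ioi.2 hc)).le
  · exact (key _ measurableSet_Ioi (ae_eq_refl _) (Ioi_subset_Ioi hc.le)).ge

/-- Weighted tails of `scaledLaw` are bounded uniformly in the scale: on `[c, ∞)` the function
`1 - e^{-u/c}` is at least `1 - e⁻¹`, and its integral is at most `c ^ (-β)`. -/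
lemma scaledLaw_tail_le [IsProbabilityMeasure μ] (hsupp : μ (Iic 0) = 0) (hβ0 : 0 < β)
    (hlap : ∀ r : ℝ, 0 < r →
      ∫ s in Ioi (0:ℝ), Real.exp (-(r * s)) ∂μ = Real.exp (-(r ^ β)))
    {x : ℝ} (hx : 0 < x) {p : ℝ} (hp : 0 < p) {c : ℝ} (hc : 0 < c) :
    ∫⁻ u in Ici c, ENNReal.ofReal (u ^ (-p)) ∂scaledLaw μ β x ≤
      ENNReal.ofReal (1 / (1 - Real.exp (-1)) * c ^ (-(p + β))) := by
  have he : 0 < 1 - Real.exp (-1) := by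
    have : Real.exp (-1) < 1 := Real.exp_lt_one_iff.2 (by norm_num)
    linarith
  have hci : 0 ≤ c⁻¹ := by positivity
  rw [← lintegral_indicator measurableSet_Ici]
  calc _ ≤ ∫⁻ u, ENNReal.ofReal (c ^ (-p) / (1 - Real.exp (-1)) *
          (1 - Real.exp (-(c⁻¹ * u)))) ∂scaledLaw μ β x := by
        refine lintegral_mono fun u => ?_
        by_cases hu : u ∈ Ici c
        · rw [indicator_of_mem hu]
          refine ENNReal.ofReal_le_ofReal ?_
          have hu' : c ≤ u := hu
          have h1 : u ^ (-p) ≤ c ^ (-p) := Real.rpow_le_rpow_of_nonpos hc hu' (by linarith)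
          have h2 : Real.exp (-(c⁻¹ * u)) ≤ Real.exp (-1) := by
            gcongr
            rw [inv_mul_eq_div, le_div_iff₀ hc]; linarith
          have h3 : 0 < c ^ (-p) := Real.rpow_pos_of_pos hc _
          calc u ^ (-p) ≤ c ^ (-p) / (1 - Real.exp (-1)) * (1 - Real.exp (-1)) := by
                rwa [div_mul_cancel₀ _ he.ne']
            _ ≤ _ := by gcongr
        · simp [hu]
    _ = ENNReal.ofReal (c ^ (-p) / (1 - Real.exp (-1)) *
          (x ^ β * (1 - Real.exp (-(c⁻¹ ^ β * x ^ (-β)))))) := by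
        rw [← ofReal_integral_eq_lintegral_ofReal, integral_const_mul,
          laplace_scaledLaw hsupp hβ0 hlap hx hci]
        · exact (integrable_laplace_scaledLaw hsupp hx hci).const_mul _
        · filter_upwards [scaledLaw_pos hsupp hx] with u hu
          have : Real.exp (-(c⁻¹ * u)) ≤ 1 := Real.exp_le_one_iff.2 (by nlinarith)
          have h3 : 0 < c ^ (-p) := Real.rpow_pos_of_pos hc _
          exact mul_nonneg (by positivity) (by linarith)
    _ ≤ _ := by
        refine ENNReal.ofReal_le_ofReal ?_
        have h1 : 1 - Real.exp (-(c⁻¹ ^ β * x ^ (-β))) ≤ c⁻¹ ^ β * x ^ (-β) := by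
          linarith [Real.add_one_le_exp (-(c⁻¹ ^ β * x ^ (-β)))]
        have h3 : 0 < c ^ (-p) := Real.rpow_pos_of_pos hc _
        calc _ ≤ c ^ (-p) / (1 - Real.exp (-1)) * (x ^ β * (c⁻¹ ^ β * x ^ (-β))) := by gcongr
          _ = _ := by
            rw [neg_add, Real.rpow_add hc, Real.inv_rpow hc.le, ← Real.rpow_neg hc.le,
              Real.rpow_neg hx.le]
            have := (Real.rpow_pos_of_pos hx β).ne'
            field_simp

/-- As the scale tends to infinity, the integral of `u⁻ᵖ Φ(u)` under the rescaled law converges to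
the integral under the Lévy measure. -/
lemma tendsto_lintegral_scaledLaw [IsProbabilityMeasure μ] (hsupp : μ (Iic 0) = 0) (hβ0 : 0 < β)
    (hβ1 : β < 1)
    (hlap : ∀ r : ℝ, 0 < r →
      ∫ s in Ioi (0:ℝ), Real.exp (-(r * s)) ∂μ = Real.exp (-(r ^ β)))
    {p : ℝ} (hp : 0 < p)
    {Φ : ℝ → ℝ} (hΦ : Measurable Φ) (hmono : ∀ u v, 0 < u → u ≤ v → Φ u ≤ Φ v)
    (hfin : ∫⁻ u in Ioi 0, ENNReal.ofReal (u ^ (-p)) * ENNReal.ofReal (Φ u) ∂stableLevy β ≠ ⊤) :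
    Tendsto (fun x : {x : ℝ // 0 < x} =>
        ∫⁻ u in Ioi 0, ENNReal.ofReal (u ^ (-p)) * ENNReal.ofReal (Φ u) ∂scaledLaw μ β x)
      (comap Subtype.val atTop)
      (𝓝 (∫⁻ u in Ioi 0, ENNReal.ofReal (u ^ (-p)) * ENNReal.ofReal (Φ u) ∂stableLevy β)) := by
  have hG : 0 < Real.Gamma (1 - β) := Real.Gamma_pos_of_pos (by linarith)
  have hK : 0 < β / Real.Gamma (1 - β) / (p + β) := by positivity
  have hlim : ∀ k : ℕ, Tendsto
      (fun x : {x : ℝ // 0 < x} => ∫ u, (1 - Real.exp (-(k * u))) ∂scaledLaw μ β x)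
      (comap Subtype.val atTop) (𝓝 (∫ u, (1 - Real.exp (-(k * u))) ∂stableLevy β)) := by
    intro k
    rw [(laplace_stableLevy hβ0 hβ1 k.cast_nonneg).2]
    refine ((tendsto_laplace hβ0 _).comp tendsto_comap).congr fun x => ?_
    exact (laplace_scaledLaw hsupp hβ0 hlap x.2 k.cast_nonneg).symm
  refine tendsto_lintegral_of_halfLines (K := β / Real.Gamma (1 - β) / (p + β)) (q := p + β)
    (C := ENNReal.ofReal (1 / (1 - Real.exp (-1)) / (β / Real.Gamma (1 - β) / (p + β))))
    ENNReal.ofReal_ne_top hK (by positivity)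
    (fun c hc U h1 h2 => stableLevy_tail hβ0 hβ1 hp hc h1 h2) (fun x c hc => ?_)
    (fun c hc U hUm h1 h2 => ?_) hΦ hmono hfin
  · rw [← ENNReal.ofReal_mul' (by positivity)]
    refine (scaledLaw_tail_le hsupp hβ0 hlap x.2 hp hc).trans_eq ?_
    congr 1
    rw [← mul_assoc, div_mul_cancel₀ _ hK.ne']
  · exact tendsto_lintegral_halfLine (fun x => scaledLaw_pos hsupp x.2) (stableLevy_pos β)
      (fun x k => integrable_laplace_scaledLaw hsupp x.2 k.cast_nonneg)
      (fun k => (laplace_stableLevy hβ0 hβ1 k.cast_nonneg).1) hlim hp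
      (fun c hc => stableLevy_tail hβ0 hβ1 hp hc Ioi_subset_Ici_self subset_rfl) hc h1 h2 hUm

end Stable

/-! ### The profile function and scaling -/

section Profile

variable {β d α : ℝ} {F : ℝ → ℝ}

lemma integrableOn_profile (hβ0 : 0 < β) (hd : 0 < d) (hα : 0 < α)
    (hFpos : ∀ r : ℝ, 0 ≤ r → 0 < F r)
    (hFanti : ∀ r s : ℝ, 0 ≤ r → r ≤ s → F s ≤ F r)
    (hFint : IntegrableOn (fun s : ℝ => s ^ (d + α * β - 1) * F s) (Ioi (1:ℝ))) :
    IntegrableOn (fun s : ℝ => s ^ (d + α * β - 1) * F s) (Ioi (0:ℝ)) := by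
  have hαβ : 0 < α * β := by positivity
  rw [← Ioc_union_Ioi_eq_Ioi zero_le_one]
  refine IntegrableOn.union ?_ hFint
  have h1 : IntegrableOn (fun s : ℝ => s ^ (d + α * β - 1)) (Ioc 0 1) :=
    (intervalIntegral.intervalIntegrable_rpow' (a := 0) (b := 1) (by linarith)).1
  have hm : AEStronglyMeasurable F (volume.restrict (Ioc (0:ℝ) 1)) :=
    (aemeasurable_restrict_of_antitoneOn measurableSet_Ioc
      fun x hx y _ hxy => hFanti x y hx.1.le hxy).aestronglyMeasurable
  refine Integrable.mul_bdd (c := F 0) h1 hm ?_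
  filter_upwards [ae_restrict_mem measurableSet_Ioc] with s hs
  rw [Real.norm_eq_abs, abs_of_pos (hFpos s hs.1.le)]
  exact hFanti 0 s le_rfl hs.1.le

lemma integral_profile_pos (hFpos : ∀ r : ℝ, 0 ≤ r → 0 < F r)
    (hint : IntegrableOn (fun s : ℝ => s ^ (d + α * β - 1) * F s) (Ioi (0:ℝ))) :
    0 < ∫ s in Ioi (0:ℝ), s ^ (d + α * β - 1) * F s := by
  have hpos : ∀ s ∈ Ioi (0:ℝ), 0 < s ^ (d + α * β - 1) * F s := fun s hs =>
    mul_pos (Real.rpow_pos_of_pos hs _) (hFpos s (le_of_lt hs))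
  rw [setIntegral_pos_iff_support_of_nonneg_ae _ hint]
  · have : Function.support (fun s : ℝ => s ^ (d + α * β - 1) * F s) ∩ Ioi 0 = Ioi 0 :=
      inter_eq_right.2 fun s hs => (hpos s hs).ne'
    rw [this]
    simp
  · filter_upwards [ae_restrict_mem measurableSet_Ioi] with s hs
    exact (hpos s hs).le

/-- The substitution `s = u ^ (-1/α)` computes the integral against the Lévy measure. -/
lemma lintegral_profile (hβ0 : 0 < β) (hβ1 : β < 1) (hα : 0 < α)
    (hFpos : ∀ r : ℝ, 0 ≤ r → 0 < F r)
    (hΦ : Measurable fun u : ℝ => F (max (u ^ (-(1 / α))) 0))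
    (hint : IntegrableOn (fun s : ℝ => s ^ (d + α * β - 1) * F s) (Ioi (0:ℝ))) :
    ∫⁻ u in Ioi 0, ENNReal.ofReal (u ^ (-(d / α))) *
        ENNReal.ofReal (F (max (u ^ (-(1 / α))) 0)) ∂stableLevy β =
      ENNReal.ofReal (α * β / Real.Gamma (1 - β) *
        ∫ s in Ioi (0:ℝ), s ^ (d + α * β - 1) * F s) := by
  have hG : 0 < Real.Gamma (1 - β) := Real.Gamma_pos_of_pos (by linarith)
  have hα' : -(1 / α) ≠ 0 := by simp [hα.ne']
  have hint' := (integrableOn_Ioi_comp_rpow_iff _ hα').2 hint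
  have hm : Measurable fun u : ℝ => ENNReal.ofReal (u ^ (-(d / α))) *
      ENNReal.ofReal (F (max (u ^ (-(1 / α))) 0)) := by
    have := hΦ.ennreal_ofReal
    exact (by fun_prop : Measurable fun u : ℝ => ENNReal.ofReal (u ^ (-(d / α)))).mul this
  rw [lintegral_stableLevy hm _ measurableSet_Ioi, inter_self,
    ← integral_comp_rpow_Ioi _ hα', ← integral_const_mul,
    ofReal_integral_eq_lintegral_ofReal (hint'.const_mul _)]
  · refine setLIntegral_congr_fun measurableSet_Ioi fun u hu => ?_
    have hu0 : (0:ℝ) < u := hu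
    have hr : 0 < u ^ (-(1 / α)) := Real.rpow_pos_of_pos hu0 _
    have hF := hFpos _ hr.le
    simp only [max_eq_left hr.le, smul_eq_mul]
    rw [← ENNReal.ofReal_mul (by positivity), ← ENNReal.ofReal_mul (by positivity)]
    congr 1
    rw [abs_neg, abs_of_pos (by positivity), ← Real.rpow_mul hu0.le]
    have e : u ^ (-1 - β) * u ^ (-(d / α)) =
        u ^ (-(1 / α) - 1) * u ^ (-(1 / α) * (d + α * β - 1)) := by
      rw [← Real.rpow_add hu0, ← Real.rpow_add hu0]
      congr 1
      field_simp
      ring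
    calc _ = β / Real.Gamma (1 - β) * (u ^ (-1 - β) * u ^ (-(d / α))) *
          F (u ^ (-(1 / α))) := by ring
      _ = _ := by rw [e]; field_simp
  · filter_upwards [ae_restrict_mem measurableSet_Ioi] with u hu
    have hu0 : (0:ℝ) < u := hu
    have hr : 0 < u ^ (-(1 / α)) := Real.rpow_pos_of_pos hu0 _
    have hF := hFpos _ hr.le
    simp only [smul_eq_mul]
    show 0 ≤ _
    positivity

/-- Scaling: the subordinated kernel at distance `D > 0` and time `t` is an integral against the
rescaled law with scale `(C₂ D)^α t^(-1/β)`. -/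
lemma subordinate_eq {μ : Measure ℝ} [IsProbabilityMeasure μ] (hsupp : μ (Iic 0) = 0)
    (hβ0 : 0 < β) (hα : 0 < α) {C₁ C₂ : ℝ} (hC₂ : 0 < C₂) {t D : ℝ} (ht : 0 < t) (hD : 0 < D)
    (hFpos : ∀ r : ℝ, 0 ≤ r → 0 < F r)
    (hΦ : Measurable fun u : ℝ => F (max (u ^ (-(1 / α))) 0)) :
    ∫ s in Ioi (0:ℝ), C₁ * (t ^ (1/β) * s) ^ (-(d/α)) *
          F (C₂ * D * (t ^ (1/β) * s) ^ (-(1/α))) ∂μ =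
      C₁ * C₂ ^ (-(d + α * β)) * (D ^ (-(d + α * β)) * t) *
        (∫⁻ u in Ioi 0, ENNReal.ofReal (u ^ (-(d / α))) *
          ENNReal.ofReal (F (max (u ^ (-(1 / α))) 0))
            ∂scaledLaw μ β ((C₂ * D) ^ α / t ^ (1 / β))).toReal := by
  have hA : 0 < C₂ * D := by positivity
  set x := (C₂ * D) ^ α / t ^ (1 / β) with hx
  have hx0 : 0 < x := by positivity
  have hpos := scaledLaw_pos (β := β) hsupp hx0
  have h : ∀ᵐ s ∂μ, 0 < s := by
    rw [ae_iff]; simpa [Iic_def] using hsupp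
  have hxβ : x ^ β = (C₂ * D) ^ (α * β) / t := by
    rw [hx, Real.div_rpow (by positivity) (by positivity), ← Real.rpow_mul hA.le,
      ← Real.rpow_mul ht.le, one_div_mul_cancel hβ0.ne', Real.rpow_one]
  rw [Measure.restrict_eq_self_of_ae_mem (s := Ioi 0) h,
    Measure.restrict_eq_self_of_ae_mem (s := Ioi 0) hpos]
  have h1 : ∫⁻ u, ENNReal.ofReal (u ^ (-(d / α))) *
          ENNReal.ofReal (F (max (u ^ (-(1 / α))) 0)) ∂scaledLaw μ β x =
      ∫⁻ u, ENNReal.ofReal (u ^ (-(d / α)) * F (max (u ^ (-(1 / α))) 0)) ∂scaledLaw μ β x := by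
    refine lintegral_congr fun u => ?_
    rw [ENNReal.ofReal_mul' (hFpos _ (le_max_right _ _)).le]
  have hm : Measurable fun u : ℝ => u ^ (-(d / α)) * F (max (u ^ (-(1 / α))) 0) :=
    (by fun_prop : Measurable fun u : ℝ => u ^ (-(d / α))).mul hΦ
  rw [h1, ← integral_eq_lintegral_of_nonneg_ae _ hm.aestronglyMeasurable,
    integral_scaledLaw hx0, hxβ]
  · have h2 : ∫ s, C₁ * (t ^ (1/β) * s) ^ (-(d/α)) *
          F (C₂ * D * (t ^ (1/β) * s) ^ (-(1/α))) ∂μ =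
        ∫ s, (C₁ * (C₂ * D) ^ (-d)) *
          ((s / x) ^ (-(d / α)) * F (max ((s / x) ^ (-(1 / α))) 0)) ∂μ := by
      refine integral_congr_ae ?_
      filter_upwards [h] with s hs
      have hsx : 0 < s / x := by positivity
      have e : t ^ (1 / β) * s = (C₂ * D) ^ α * (s / x) := by
        rw [hx]
        field_simp
      rw [e, Real.mul_rpow (by positivity) hsx.le, Real.mul_rpow (by positivity) hsx.le,
        ← Real.rpow_mul hA.le, ← Real.rpow_mul hA.le, max_eq_left (Real.rpow_nonneg hsx.le _),
        show α * -(d / α) = -d by field_simp, show α * -(1 / α) = -1 by field_simp,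
        Real.rpow_neg_one, mul_inv_cancel_left₀ hA.ne']
      ring
    rw [h2, integral_const_mul]
    rw [neg_add, Real.rpow_add hC₂, Real.rpow_add hD, Real.mul_rpow hC₂.le hD.le,
      Real.mul_rpow hC₂.le hD.le, Real.rpow_neg hC₂.le (α * β), Real.rpow_neg hD.le (α * β)]
    have := (Real.rpow_pos_of_pos hC₂ (α * β)).ne'
    have := (Real.rpow_pos_of_pos hD (α * β)).ne'
    field_simp
  · filter_upwards [hpos] with u hu
    exact mul_nonneg (Real.rpow_nonneg hu.le _) (hFpos _ (le_max_right _ _)).le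

end Profile

/-! ### The asymptotics of the subordinate kernel -/

theorem stmt_0
    (β : ℝ) (hβ0 : 0 < β) (hβ1 : β < 1)
    (μ : Measure ℝ) (hprob : IsProbabilityMeasure μ)
    (hsupp : μ (Set.Iic 0) = 0)
    (hlap : ∀ r : ℝ, 0 < r →
      ∫ s in Set.Ioi (0:ℝ), Real.exp (-(r * s)) ∂μ = Real.exp (-(r ^ β)))
    {M : Type*} [MetricSpace M]
    (d α C₁ C₂ : ℝ) (hd : 0 < d) (hα : 0 < α) (hC₁ : 0 < C₁) (hC₂ : 0 < C₂)
    (F : ℝ → ℝ) (hFpos : ∀ r : ℝ, 0 ≤ r → 0 < F r)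
    (hFanti : ∀ r s : ℝ, 0 ≤ r → r ≤ s → F s ≤ F r)
    (hFint : IntegrableOn (fun s : ℝ => s ^ (d + α * β - 1) * F s) (Set.Ioi (1:ℝ)))
    (pS : ℝ → M → M → ℝ)
    (hpS : ∀ t : ℝ, 0 < t → ∀ x y : M,
      pS t x y = ∫ s in Set.Ioi (0:ℝ),
        C₁ * (t ^ (1/β) * s) ^ (-(d/α)) *
          F (C₂ * dist x y * (t ^ (1/β) * s) ^ (-(1/α))) ∂μ) :
    ∀ ε : ℝ, 0 < ε → ∃ R : ℝ, 0 < R ∧ ∀ t : ℝ, 0 < t → ∀ x y : M,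
      R ≤ dist x y * t ^ (-(1/(α*β))) →
      |pS t x y /
        (C₁ * (α * β / Real.Gamma (1 - β)) * C₂ ^ (-(d + α * β)) *
          (∫ s in Set.Ioi (0:ℝ), s ^ (d + α * β - 1) * F s) *
          (dist x y ^ (-(d + α * β)) * t)) - 1| ≤ ε := by
  intro ε hε
  have hG : 0 < Real.Gamma (1 - β) := Real.Gamma_pos_of_pos (by linarith)
  -- `F` is only controlled on `[0, ∞)`; extended by `F 0` it is antitone on the line
  have hFm : Measurable fun r : ℝ => F (max r 0) :=
    (show Antitone fun r : ℝ => F (max r 0) from fun a b hab =>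
      hFanti _ _ (le_max_right _ _) (max_le_max_right 0 hab)).measurable
  have hΦ : Measurable fun u : ℝ => F (max (u ^ (-(1 / α))) 0) :=
    hFm.comp (by fun_prop : Measurable fun u : ℝ => u ^ (-(1 / α)))
  have hint := integrableOn_profile hβ0 hd hα hFpos hFanti hFint
  have hIpos := integral_profile_pos hFpos hint
  set I := ∫ s in Set.Ioi (0:ℝ), s ^ (d + α * β - 1) * F s with hI
  have hJ : 0 < α * β / Real.Gamma (1 - β) * I := by positivity
  have hval := lintegral_profile hβ0 hβ1 hα hFpos hΦ hint
  have hlim := tendsto_lintegral_scaledLaw hsupp hβ0 hβ1 hlap (p := d / α) (by positivity) hΦ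
    (fun u v hu huv => hFanti _ _ (le_max_right _ _) (max_le_max_right 0
      (Real.rpow_le_rpow_of_nonpos hu huv (by simp [hα.le])))) (by rw [hval]; exact ENNReal.ofReal_ne_top)
  rw [hval] at hlim
  have hlim2 := ((ENNReal.tendsto_toReal ENNReal.ofReal_ne_top).comp hlim).div_const
    (α * β / Real.Gamma (1 - β) * I)
  rw [ENNReal.toReal_ofReal hJ.le, div_self hJ.ne'] at hlim2
  obtain ⟨X, hX⟩ := eventually_atTop.1 (eventually_comap.1 (Metric.tendsto_nhds.1 hlim2 ε hε))
  refine ⟨(max X 1) ^ (1 / α) / C₂, by positivity, fun t ht x y hxy => ?_⟩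
  have hX1 : 0 < max X 1 := by positivity
  have hD : 0 < dist x y := by
    have h1 : 0 < dist x y * t ^ (-(1 / (α * β))) := lt_of_lt_of_le (by positivity) hxy
    exact pos_of_mul_pos_left h1 (by positivity)
  have hscale : X ≤ (C₂ * dist x y) ^ α / t ^ (1 / β) := by
    have h1 : (max X 1) ^ (1 / α) ≤ C₂ * dist x y * t ^ (-(1 / (α * β))) := by
      rw [div_le_iff₀ hC₂] at hxy
      linarith
    have h2 := Real.rpow_le_rpow (by positivity) h1 hα.le
    rw [← Real.rpow_mul hX1.le, one_div_mul_cancel hα.ne', Real.rpow_one,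
      Real.mul_rpow (by positivity) (by positivity), ← Real.rpow_mul ht.le,
      show -(1 / (α * β)) * α = -(1 / β) by field_simp, Real.rpow_neg ht.le,
      ← div_eq_mul_inv] at h2
    exact (le_max_left _ _).trans h2
  have hfinal := hX _ hscale ⟨(C₂ * dist x y) ^ α / t ^ (1 / β), by positivity⟩ rfl
  rw [Real.dist_eq] at hfinal
  rw [hpS t ht x y, subordinate_eq hsupp hβ0 hα hC₂ ht hD hFpos hΦ]
  refine le_trans (le_of_eq ?_) hfinal.le
  congr 2
  simp only [Function.comp]
  have := (Real.rpow_pos_of_pos hC₂ (-(d + α * β))).ne'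
  have := (Real.rpow_pos_of_pos hD (-(d + α * β))).ne'
  field_simp
end

section
/- Assume the heat kernel has the form p(t,x,y) = C₁ t^{-d/α} F(C₂ ρ(x,y) t^{-1/α}) and that ∫₁^∞ s^{d-α-1} F(s) ds < ∞. Then, as ρ(x,y)^{-α/β} t → ∞, the inverse-subordinated kernel satisfies: if d < α, p^{S^{-1}}(t,x,y) ∼ C₁ F(0+) (Γ(1 - d/α) / Γ(1 - βd/α)) t^{-βd/α}; if d = α, p^{S^{-1}}(t,x,y) ∼ C₁ (β/Γ(1-β)) F(0+) t^{-β} log(ρ(x,y)^{-α/β} t); and if d > α, p^{S^{-1}}(t,x,y) ∼ C₁ (C₂^{α-d} α / Γ(1-β)) (∫₀^∞ s^{d-α-1} F(s) ds) ρ(x,y)^{α-d} t^{-β}. Here F(0+) = lim_{r↓0} F(r), and '∼ as ρ(x,y)^{-α/β} t → ∞' means: for every ε > 0 there exists R > 0 such that whenever t > 0, x ≠ y ∈ M and ρ(x,y)^{-α/β} t ≥ R, the ratio of the two sides lies within ε of 1. -/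
open MeasureTheory Set

/-!
Put `γ = βd/α`, `z = ρ(x,y)^{-α/β} t` and `φ(u) = F(C₂ u^{β/α})` (extended by `F0` to `u ≤ 0`, so
that `φ` is antitone on `ℝ`). The scaling form of the heat kernel gives
`p^{S⁻¹}(t,x,y) = C₁ t^{-γ} ∫ s^γ φ(s/z) μ(ds)` (`kernel_integral`), so everything reduces to the
behaviour of this integral as `z → ∞`, where `φ(s/z) → F0` for fixed `s`.

* If `γ < β`, then `μ` has the finite moment `Γ(1-γ/β)/Γ(1-γ)` (`moment`), and dominated convergence
  applies (`core_light`).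
* If `γ > β`, the rescaled measures `z^β μ(z du)` converge on half-lines to the Lévy measure
  `ν(du) = β/Γ(1-β) u^{-β-1} du` (`tail_tendsto`). Writing `u^γ = ∫_0^u γ v^{γ-1} dv`
  (`moment_eq_tails`) and layering `φ` into its superlevel sets, which are half-lines, upgrades
  this to convergence of `∫ u^γ φ(u) z^β μ(z du)` to `∫ u^γ φ(u) ν(du)` (`core_heavy`). The bound
  `μ[x,∞) ≤ K x^{-β}` (`tail_Ici_le`) provides the dominating function.
* If `γ = β`, the same tail formula, in the variable `θ = log v / log z`, has an integrand
  converging to the constant `β F0/Γ(1-β)` on `0 < θ < 1` and to `0` outside, with an integrable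
  dominating function (`core_log`).

The tail asymptotics `μ(x,∞) ~ x^{-β}/Γ(1-β)` come from the Laplace transform by Karamata's
argument (`tilted_tendsto`): weighting the rescaled measures by `1 - e^{-u}` makes them finite,
their integrals of `e^{-nu}` are explicit differences of Laplace transforms, and Weierstrass
approximation on `w = e^{-u} ∈ [0,1]` passes to continuous test functions.
-/

section

open Filter Topology
open scoped ENNReal

/-! ### The Laplace transform and the moments of the stable law -/

lemma one_sub_exp_integrable {γ r : ℝ} (h0 : 0 < γ) (h1 : γ < 1) (hr : 0 ≤ r) :
    IntegrableOn (fun u : ℝ => (1 - Real.exp (-(r * u))) * u ^ (-γ - 1)) (Ioi 0) := by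
  rw [← Ioc_union_Ioi_eq_Ioi (zero_le_one' ℝ)]
  refine IntegrableOn.union ?_ ?_
  · have hi : IntegrableOn (fun u : ℝ => r * u ^ (-γ)) (Ioc 0 1) := by
      refine Integrable.const_mul ?_ r
      have := intervalIntegral.intervalIntegrable_rpow' (a := 0) (b := 1) (r := -γ) (by linarith)
      rwa [intervalIntegrable_iff_integrableOn_Ioc_of_le zero_le_one] at this
    refine Integrable.mono' hi (by fun_prop) ?_
    filter_upwards [ae_restrict_mem measurableSet_Ioc] with u hu
    have hu0 : 0 < u := hu.1
    have e1 := Real.add_one_le_exp (-(r * u))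
    have e2 : Real.exp (-(r * u)) ≤ 1 := Real.exp_le_one_iff.2 (by nlinarith)
    rw [Real.norm_of_nonneg (mul_nonneg (by linarith) (by positivity))]
    calc _ ≤ (r * u) * u ^ (-γ - 1) := by gcongr; linarith
      _ = r * u ^ (-γ) := by
        rw [Real.rpow_sub_one hu0.ne']; field_simp
  · refine Integrable.mono' (integrableOn_Ioi_rpow_of_lt (a := -γ - 1) (by linarith) one_pos)
      (by fun_prop) ?_
    filter_upwards [ae_restrict_mem measurableSet_Ioi] with u hu
    have hu0 : 0 < u := one_pos.trans hu
    have e2 : Real.exp (-(r * u)) ≤ 1 := Real.exp_le_one_iff.2 (by nlinarith)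
    have e3 := Real.exp_pos (-(r * u))
    rw [Real.norm_of_nonneg (mul_nonneg (by linarith) (by positivity))]
    exact mul_le_of_le_one_left (by positivity) (by linarith)

/-- Integration by parts reduces this to Euler's integral for `Γ(1 - γ)`. -/
lemma one_sub_exp_integral {γ r : ℝ} (h0 : 0 < γ) (h1 : γ < 1) (hr : 0 ≤ r) :
    ∫ u in Ioi (0:ℝ), (1 - Real.exp (-(r * u))) * u ^ (-γ - 1)
      = r ^ γ * (Real.Gamma (1 - γ) / γ) := by
  rcases hr.eq_or_lt with rfl | hr
  · simp [Real.zero_rpow h0.ne']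
  have hG := Real.integral_rpow_mul_exp_neg_mul_Ioi (a := 1 - γ) (by linarith) hr
  have hpos : 0 < (1 / r) ^ (1 - γ) * Real.Gamma (1 - γ) :=
    mul_pos (by positivity) (Real.Gamma_pos_of_pos (by linarith))
  have hGi : IntegrableOn (fun u : ℝ => u ^ (1 - γ - 1) * Real.exp (-(r * u))) (Ioi 0) := by
    by_contra h
    rw [integral_undef h] at hG
    linarith
  have key := integral_Ioi_mul_deriv_eq_deriv_mul (a := 0) (a' := 0) (b' := 0)
    (u := fun u : ℝ => 1 - Real.exp (-(r * u))) (u' := fun u => r * Real.exp (-(r * u)))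
    (v := fun u : ℝ => u ^ (-γ) / (-γ)) (v' := fun u => u ^ (-γ - 1)) ?_ ?_
    (one_sub_exp_integrable h0 h1 hr.le) ?_ ?_ ?_
  · rw [key]
    have : ∀ u : ℝ, r * Real.exp (-(r * u)) * (u ^ (-γ) / -γ)
        = (- r / γ) * (u ^ (1 - γ - 1) * Real.exp (-(r * u))) := by
      intro u
      rw [show 1 - γ - 1 = -γ by ring]
      field_simp
    simp_rw [this]
    rw [integral_const_mul, hG, one_div, Real.inv_rpow hr.le, Real.rpow_sub hr, Real.rpow_one]
    have := Real.rpow_pos_of_pos hr γ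
    field_simp
    ring
  · intro x hx
    have h := ((hasDerivAt_id x).const_mul r).neg.exp.const_sub 1
    simp only [id] at h
    convert! h using 1
    simp [mul_comm]
  · intro x hx
    have h := (Real.hasDerivAt_rpow_const (x := x) (p := -γ) (Or.inl (ne_of_gt hx))).div_const (-γ)
    convert! h using 1
    field_simp
  · refine (hGi.const_mul (- r / γ)).congr ?_
    refine Eventually.of_forall fun u => ?_
    simp only [Pi.mul_apply]
    rw [show 1 - γ - 1 = -γ by ring]
    field_simp
  · have hb : Tendsto (fun u : ℝ => (r / γ) * u ^ (1 - γ)) (𝓝[>] 0) (𝓝 0) := by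
      have : Tendsto (fun u : ℝ => (r / γ) * u ^ (1 - γ)) (𝓝 0) (𝓝 ((r / γ) * 0 ^ (1 - γ))) :=
        (Real.continuousAt_rpow_const _ _ (Or.inr (by linarith))).const_mul _
      rw [Real.zero_rpow (by linarith), mul_zero] at this
      exact this.mono_left nhdsWithin_le_nhds
    refine squeeze_zero_norm' ?_ hb
    filter_upwards [self_mem_nhdsWithin] with u hu
    have hu0 : 0 < u := hu
    have e1 := Real.add_one_le_exp (-(r * u))
    have e2 : Real.exp (-(r * u)) ≤ 1 := Real.exp_le_one_iff.2 (by nlinarith)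
    simp only [Pi.mul_apply, norm_mul, norm_div, norm_neg]
    rw [Real.norm_of_nonneg (by linarith), Real.norm_of_nonneg (by positivity),
      Real.norm_of_nonneg h0.le]
    calc _ ≤ (r * u) * (u ^ (-γ) / γ) := by gcongr; linarith
      _ = _ := by
        rw [show 1 - γ = 1 + -γ by ring, Real.rpow_add hu0, Real.rpow_one]; ring
  · have hb : Tendsto (fun u : ℝ => u ^ (-γ) / γ) atTop (𝓝 0) := by
      simpa using (tendsto_rpow_neg_atTop h0).div_const γ
    refine squeeze_zero_norm' ?_ hb
    filter_upwards [eventually_gt_atTop 0] with u hu0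
    have e2 : Real.exp (-(r * u)) ≤ 1 := Real.exp_le_one_iff.2 (by nlinarith)
    have e3 := Real.exp_pos (-(r * u))
    simp only [Pi.mul_apply, norm_mul, norm_div, norm_neg]
    rw [Real.norm_of_nonneg (by linarith), Real.norm_of_nonneg (by positivity),
      Real.norm_of_nonneg h0.le]
    exact mul_le_of_le_one_left (by positivity) (by linarith)

section stable
variable {β : ℝ} {μ : Measure ℝ} [IsProbabilityMeasure μ]

omit [IsProbabilityMeasure μ] in
lemma ae_pos (hsupp : μ (Iic 0) = 0) : ∀ᵐ s ∂μ, 0 < s := by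
  rw [ae_iff]; simpa [Iic] using hsupp

/-- The Laplace transform as an integral over the whole line, including `r = 0`. -/
lemma laplace_full (hβ0 : 0 < β) (hsupp : μ (Iic 0) = 0)
    (hlap : ∀ r : ℝ, 0 < r → ∫ s in Ioi (0:ℝ), Real.exp (-(r * s)) ∂μ = Real.exp (-(r ^ β)))
    {r : ℝ} (hr : 0 ≤ r) : ∫ s, Real.exp (-(r * s)) ∂μ = Real.exp (-(r ^ β)) := by
  rcases hr.eq_or_lt with rfl | hr
  · simp [Real.zero_rpow hβ0.ne']
  rw [← hlap r hr, Measure.restrict_eq_self_of_ae_mem]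
  exact ae_pos hsupp

lemma laplace_integrable (hsupp : μ (Iic 0) = 0) {r : ℝ} (hr : 0 ≤ r) :
    Integrable (fun s => Real.exp (-(r * s))) μ := by
  refine Integrable.mono' (integrable_const 1) (by fun_prop) ?_
  filter_upwards [ae_pos hsupp] with s hs
  rw [Real.norm_of_nonneg (Real.exp_pos _).le]
  exact Real.exp_le_one_iff.2 (by nlinarith)

/-- Write `s^γ` as a multiple of `∫ (1 - e^{-sr}) r^{-γ-1} dr`, exchange the integrals, and insert
the Laplace transform `e^{-r^β}`. -/
lemma moment_lintegral (hβ0 : 0 < β) (hβ1 : β < 1) (hsupp : μ (Iic 0) = 0)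
    (hlap : ∀ r : ℝ, 0 ≤ r → ∫ s, Real.exp (-(r * s)) ∂μ = Real.exp (-(r ^ β)))
    {γ : ℝ} (hγ0 : 0 < γ) (hγ : γ < β) :
    ∫⁻ s, ENNReal.ofReal (s ^ γ) ∂μ
      = ENNReal.ofReal (Real.Gamma (1 - γ / β) / Real.Gamma (1 - γ)) := by
  have hγ1 : γ < 1 := hγ.trans hβ1
  have hΓ : 0 < Real.Gamma (1 - γ) := Real.Gamma_pos_of_pos (by linarith)
  have hγβ : γ / β < 1 := by rw [div_lt_one hβ0]; exact hγ
  have hγβ0 : 0 < γ / β := by positivity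
  have nn : ∀ {r s : ℝ}, 0 < r → 0 < s → 0 ≤ (1 - Real.exp (-(s * r))) * r ^ (-γ - 1) := by
    intro r s hr hs
    have e2 : Real.exp (-(s * r)) ≤ 1 := Real.exp_le_one_iff.2 (by nlinarith)
    exact mul_nonneg (by linarith) (by positivity)
  have lhs : ∫⁻ s, (∫⁻ r in Ioi (0:ℝ),
      ENNReal.ofReal ((1 - Real.exp (-(s * r))) * r ^ (-γ - 1))) ∂μ
      = (∫⁻ s, ENNReal.ofReal (s ^ γ) ∂μ) * ENNReal.ofReal (Real.Gamma (1 - γ) / γ) := by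
    rw [← lintegral_mul_const' _ _ ENNReal.ofReal_ne_top]
    refine lintegral_congr_ae ?_
    filter_upwards [ae_pos hsupp] with s hs
    rw [← ofReal_integral_eq_lintegral_ofReal (one_sub_exp_integrable hγ0 hγ1 hs.le),
      one_sub_exp_integral hγ0 hγ1 hs.le, ENNReal.ofReal_mul (by positivity)]
    filter_upwards [ae_restrict_mem measurableSet_Ioi] with r hr using nn hr hs
  have rhs : ∫⁻ s, (∫⁻ r in Ioi (0:ℝ),
      ENNReal.ofReal ((1 - Real.exp (-(s * r))) * r ^ (-γ - 1))) ∂μ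
      = ENNReal.ofReal (Real.Gamma (1 - γ / β) / γ) := by
    rw [lintegral_lintegral_swap (by fun_prop)]
    have e1 : ∀ x ∈ Ioi (0:ℝ), β⁻¹ * ((β * x ^ (β - 1)) •
        ((1 - Real.exp (-(1 * x ^ β))) * (x ^ β) ^ (-(γ / β) - 1)))
        = (1 - Real.exp (-(x ^ β))) * x ^ (-γ - 1) := by
      intro x hx
      have hx0 : 0 < x := hx
      rw [← Real.rpow_mul hx0.le, smul_eq_mul, one_mul,
        show β * (-(γ / β) - 1) = -γ - β by field_simp,
        show -γ - 1 = (β - 1) + (-γ - β) by ring, Real.rpow_add hx0]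
      field_simp
    have e2 := integral_comp_rpow_Ioi_of_pos (p := β)
      (g := fun v : ℝ => (1 - Real.exp (-(1 * v))) * v ^ (-(γ / β) - 1)) hβ0
    have e3 := (integrableOn_Ioi_comp_rpow_iff
      (fun v : ℝ => (1 - Real.exp (-(1 * v))) * v ^ (-(γ / β) - 1)) hβ0.ne').2
      (one_sub_exp_integrable hγβ0 hγβ zero_le_one)
    rw [abs_of_pos hβ0] at e3
    rw [one_sub_exp_integral hγβ0 hγβ zero_le_one] at e2
    have e4 : IntegrableOn (fun x : ℝ => (1 - Real.exp (-(x ^ β))) * x ^ (-γ - 1)) (Ioi 0) :=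
      IntegrableOn.congr_fun (e3.const_mul β⁻¹) e1 measurableSet_Ioi
    have e5 : ∫ x in Ioi (0:ℝ), (1 - Real.exp (-(x ^ β))) * x ^ (-γ - 1)
        = Real.Gamma (1 - γ / β) / γ := by
      rw [← setIntegral_congr_fun measurableSet_Ioi e1, integral_const_mul, e2, Real.one_rpow]
      field_simp
    rw [← e5, ofReal_integral_eq_lintegral_ofReal e4]
    · refine setLIntegral_congr_fun measurableSet_Ioi fun r hr => ?_
      have hr0 : 0 < r := hr
      rw [← hlap r hr0.le]
      rw [← ofReal_integral_eq_lintegral_ofReal]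
      · rw [integral_mul_const, integral_sub (integrable_const 1)]
        · simp [mul_comm]
        · simpa [mul_comm] using laplace_integrable hsupp hr0.le
      · refine Integrable.mul_const ((integrable_const 1).sub ?_) _
        simpa [mul_comm] using laplace_integrable hsupp hr0.le
      · filter_upwards [ae_pos hsupp] with s hs using nn hr0 hs
    · filter_upwards [ae_restrict_mem measurableSet_Ioi] with r hr
      have hr0 : 0 < r := hr
      have : Real.exp (-(r ^ β)) ≤ 1 := Real.exp_le_one_iff.2 (by
        have := Real.rpow_pos_of_pos hr0 β; linarith)
      exact mul_nonneg (by linarith) (by positivity)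
  rw [lhs] at rhs
  have hne : ENNReal.ofReal (Real.Gamma (1 - γ) / γ) ≠ 0 := by
    rw [Ne, ENNReal.ofReal_eq_zero, not_le]; positivity
  rw [ENNReal.eq_div_iff hne ENNReal.ofReal_ne_top |>.2 ((mul_comm _ _).trans rhs),
    ← ENNReal.ofReal_div_of_pos (by positivity)]
  congr 1
  field_simp

lemma moment (hβ0 : 0 < β) (hβ1 : β < 1) (hsupp : μ (Iic 0) = 0)
    (hlap : ∀ r : ℝ, 0 ≤ r → ∫ s, Real.exp (-(r * s)) ∂μ = Real.exp (-(r ^ β)))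
    {γ : ℝ} (hγ0 : 0 < γ) (hγ : γ < β) :
    Integrable (fun s => s ^ γ) μ ∧
    ∫ s, s ^ γ ∂μ = Real.Gamma (1 - γ / β) / Real.Gamma (1 - γ) := by
  have h := moment_lintegral hβ0 hβ1 hsupp hlap hγ0 hγ
  have nn : 0 ≤ᵐ[μ] fun s => s ^ γ := by
    filter_upwards [ae_pos hsupp] with s hs
    exact (Real.rpow_pos_of_pos hs _).le
  have hγβ : γ / β < 1 := by rw [div_lt_one hβ0]; exact hγ
  refine ⟨(lintegral_ofReal_ne_top_iff_integrable (by fun_prop) nn).1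
    (h ▸ ENNReal.ofReal_ne_top), ?_⟩
  rw [integral_eq_lintegral_of_nonneg_ae nn (by fun_prop), h, ENNReal.toReal_ofReal]
  exact div_nonneg (Real.Gamma_pos_of_pos (by linarith)).le
    (Real.Gamma_pos_of_pos (by linarith)).le

end stable

/-! ### Karamata's theorem for the rescaled law -/

section stable
variable {β : ℝ} {μ : Measure ℝ} [IsProbabilityMeasure μ]

/-- Markov's inequality for `1 - e^{-s/x}`, which is at least `1 - e^{-1}` for `s ≥ x`. -/
lemma tail_Ici_le (hsupp : μ (Iic 0) = 0)
    (hlap : ∀ r : ℝ, 0 ≤ r → ∫ s, Real.exp (-(r * s)) ∂μ = Real.exp (-(r ^ β)))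
    {x : ℝ} (hx : 0 < x) :
    μ.real (Ici x) ≤ (1 - Real.exp (-1))⁻¹ * x ^ (-β) := by
  have he : 0 < 1 - Real.exp (-1) := by
    have : Real.exp (-1) < 1 := by rw [Real.exp_lt_one_iff]; norm_num
    linarith
  rw [inv_mul_eq_div, le_div_iff₀ he]
  have hi := laplace_integrable hsupp (inv_nonneg.2 hx.le)
  have h1 : ∫ s, (Ici x).indicator (fun _ => 1 - Real.exp (-1)) s ∂μ
      ≤ ∫ s, (1 - Real.exp (-(x⁻¹ * s))) ∂μ := by
    refine integral_mono_ae ((integrable_const _).indicator measurableSet_Ici)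
      ((integrable_const 1).sub hi) ?_
    filter_upwards [ae_pos hsupp] with s hs
    by_cases h : s ∈ Ici x
    · rw [indicator_of_mem h]
      have hsx : 1 ≤ x⁻¹ * s := by rw [inv_mul_eq_div, one_le_div hx]; exact h
      gcongr
    · rw [indicator_of_notMem h]
      have : Real.exp (-(x⁻¹ * s)) ≤ 1 := Real.exp_le_one_iff.2 (by
        have : 0 < x⁻¹ * s := by positivity
        linarith)
      simpa using this
  rw [integral_indicator_const _ measurableSet_Ici, smul_eq_mul,
    integral_sub (integrable_const 1) hi, hlap _ (inv_nonneg.2 hx.le)] at h1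
  refine h1.trans ?_
  have := Real.add_one_le_exp (-(x⁻¹ ^ β))
  rw [Real.rpow_neg hx.le, ← Real.inv_rpow hx.le]
  simp only [integral_const, probReal_univ, smul_eq_mul]
  linarith

/-- Integral of `h (e^{-u})` against the measure `(1 - e^{-u}) ν_z(du)`, where `ν_z` is `z^β` times
the image of `μ` under `s ↦ s / z`. -/
noncomputable def tilted (β : ℝ) (μ : Measure ℝ) (h : ℝ → ℝ) (z : ℝ) : ℝ :=
  z ^ β * ∫ s, (1 - Real.exp (-(z⁻¹ * s))) * h (Real.exp (-(z⁻¹ * s))) ∂μ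

/-- Integral of `h (e^{-u})` against `(1 - e^{-u}) ν(du)`, where
`ν(du) = β / Γ(1 - β) u^{-β - 1} du` is the Lévy measure of the stable subordinator. -/
noncomputable def tiltedLim (β : ℝ) (h : ℝ → ℝ) : ℝ :=
  β / Real.Gamma (1 - β) * ∫ u in Ioi (0:ℝ),
    (1 - Real.exp (-u)) * u ^ (-β - 1) * h (Real.exp (-u))

lemma tilted_integrable (hsupp : μ (Iic 0) = 0) {z : ℝ} (hz : 0 < z) {h : ℝ → ℝ}
    (hc : Continuous h) :
    Integrable (fun s => (1 - Real.exp (-(z⁻¹ * s))) * h (Real.exp (-(z⁻¹ * s)))) μ := by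
  obtain ⟨B, hB⟩ := isCompact_Icc.exists_bound_of_continuousOn (s := Icc (0:ℝ) 1) hc.continuousOn
  have hB0 : 0 ≤ B := (norm_nonneg _).trans (hB 0 (by simp))
  refine Integrable.mono' (integrable_const B) (by fun_prop) ?_
  filter_upwards [ae_pos hsupp] with s hs
  have e2 : Real.exp (-(z⁻¹ * s)) ≤ 1 := Real.exp_le_one_iff.2 (by
    have : 0 < z⁻¹ * s := by positivity
    linarith)
  have e3 := Real.exp_pos (-(z⁻¹ * s))
  rw [norm_mul, Real.norm_of_nonneg (by linarith)]
  exact (mul_le_of_le_one_left (norm_nonneg _) (by linarith)).trans (hB _ ⟨e3.le, e2⟩)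

lemma tiltedLim_integrable (hβ0 : 0 < β) (hβ1 : β < 1) {h : ℝ → ℝ} (hc : Continuous h) :
    IntegrableOn (fun u : ℝ => (1 - Real.exp (-u)) * u ^ (-β - 1) * h (Real.exp (-u)))
      (Ioi 0) := by
  obtain ⟨B, hB⟩ := isCompact_Icc.exists_bound_of_continuousOn (s := Icc (0:ℝ) 1) hc.continuousOn
  have h1 := one_sub_exp_integrable hβ0 hβ1 zero_le_one
  simp only [one_mul] at h1
  refine Integrable.mul_bdd (c := B) h1 (by fun_prop) ?_
  filter_upwards [ae_restrict_mem measurableSet_Ioi] with u hu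
  refine hB _ ⟨(Real.exp_pos _).le, Real.exp_le_one_iff.2 ?_⟩
  have : (0:ℝ) < u := hu
  linarith

/-- The derivative at `0` of `v ↦ 1 - e^{-v r^β}`, along `v = z^{-β}`. -/
lemma scaled_tendsto (hβ0 : 0 < β) {r : ℝ} (hr : 0 ≤ r) :
    Tendsto (fun z : ℝ => z ^ β * (1 - Real.exp (-((r * z⁻¹) ^ β)))) atTop (𝓝 (r ^ β)) := by
  have hd : HasDerivAt (fun w : ℝ => 1 - Real.exp (-(r ^ β * w))) (r ^ β) 0 := by
    have h := ((hasDerivAt_id (0:ℝ)).const_mul (r ^ β)).fun_neg.exp.const_sub 1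
    simpa using h
  have h1 := hd.tendsto_slope_zero_right
  have h2 : Tendsto (fun z : ℝ => z ^ (-β)) atTop (𝓝[>] 0) :=
    tendsto_nhdsWithin_iff.2 ⟨tendsto_rpow_neg_atTop hβ0,
      by filter_upwards [eventually_gt_atTop 0] with z hz using Real.rpow_pos_of_pos hz _⟩
  refine (h1.comp h2).congr' ?_
  filter_upwards [eventually_gt_atTop 0] with z hz
  simp only [Function.comp, smul_eq_mul, zero_add, mul_zero, neg_zero, Real.exp_zero, sub_self,
    sub_zero]
  rw [Real.mul_rpow hr (inv_nonneg.2 hz.le), Real.inv_rpow hz.le, Real.rpow_neg hz.le, inv_inv]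

/-- For `h(w) = w^n` both sides are differences of Laplace exponents, with limit
`(n + 1)^β - n^β`. -/
lemma tilted_monomial (hβ0 : 0 < β) (hβ1 : β < 1) (hsupp : μ (Iic 0) = 0)
    (hlap : ∀ r : ℝ, 0 ≤ r → ∫ s, Real.exp (-(r * s)) ∂μ = Real.exp (-(r ^ β))) (n : ℕ) :
    Tendsto (tilted β μ (fun w => w ^ n)) atTop (𝓝 (tiltedLim β (fun w => w ^ n))) := by
  have hΓ : 0 < Real.Gamma (1 - β) := Real.Gamma_pos_of_pos (by linarith)
  have hn : (0:ℝ) ≤ n := n.cast_nonneg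
  have hlim : tiltedLim β (fun w => w ^ n) = ((n:ℝ) + 1) ^ β - (n:ℝ) ^ β := by
    have e : ∀ u : ℝ, (1 - Real.exp (-u)) * u ^ (-β - 1) * Real.exp (-u) ^ n
        = (1 - Real.exp (-(((n:ℝ) + 1) * u))) * u ^ (-β - 1)
          - (1 - Real.exp (-((n:ℝ) * u))) * u ^ (-β - 1) := by
      intro u
      rw [← Real.exp_nat_mul, show -(((n:ℝ) + 1) * u) = -u + n * -u by ring, Real.exp_add,
        show -((n:ℝ) * u) = n * -u by ring]
      ring
    unfold tiltedLim
    simp_rw [e]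
    rw [integral_sub (one_sub_exp_integrable hβ0 hβ1 (by positivity))
      (one_sub_exp_integrable hβ0 hβ1 hn), one_sub_exp_integral hβ0 hβ1 (by positivity),
      one_sub_exp_integral hβ0 hβ1 hn]
    field_simp
  rw [hlim]
  refine ((scaled_tendsto hβ0 (r := (n:ℝ) + 1) (by positivity)).sub
    (scaled_tendsto hβ0 hn)).congr' ?_
  filter_upwards [eventually_gt_atTop 0] with z hz
  have e : ∀ s : ℝ, (1 - Real.exp (-(z⁻¹ * s))) * Real.exp (-(z⁻¹ * s)) ^ n
      = Real.exp (-((n * z⁻¹) * s)) - Real.exp (-((((n:ℝ) + 1) * z⁻¹) * s)) := by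
    intro s
    rw [← Real.exp_nat_mul, show -((((n:ℝ) + 1) * z⁻¹) * s) = -(z⁻¹ * s) + n * -(z⁻¹ * s) by ring,
      Real.exp_add, show -((n * z⁻¹) * s) = n * -(z⁻¹ * s) by ring]
    ring
  unfold tilted
  simp_rw [e]
  rw [integral_sub (laplace_integrable hsupp (by positivity))
    (laplace_integrable hsupp (by positivity)), hlap _ (by positivity), hlap _ (by positivity)]
  ring

lemma tilted_poly (hβ0 : 0 < β) (hβ1 : β < 1) (hsupp : μ (Iic 0) = 0)
    (hlap : ∀ r : ℝ, 0 ≤ r → ∫ s, Real.exp (-(r * s)) ∂μ = Real.exp (-(r ^ β)))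
    (p : Polynomial ℝ) :
    Tendsto (tilted β μ (fun w => p.eval w)) atTop (𝓝 (tiltedLim β (fun w => p.eval w))) := by
  induction p using Polynomial.induction_on' with
  | add p q hp hq =>
    have : tiltedLim β (fun w => (p + q).eval w)
        = tiltedLim β (fun w => p.eval w) + tiltedLim β (fun w => q.eval w) := by
      unfold tiltedLim
      simp_rw [Polynomial.eval_add, mul_add]
      rw [integral_add (tiltedLim_integrable hβ0 hβ1 p.continuous)
        (tiltedLim_integrable hβ0 hβ1 q.continuous), mul_add]
    rw [this]
    refine (hp.add hq).congr' ?_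
    filter_upwards [eventually_gt_atTop 0] with z hz
    unfold tilted
    simp_rw [Polynomial.eval_add, mul_add]
    rw [integral_add (tilted_integrable hsupp hz p.continuous)
        (tilted_integrable hsupp hz q.continuous), mul_add]
  | monomial n a =>
    have e1 : tiltedLim β (fun w => (Polynomial.monomial n a).eval w)
        = a * tiltedLim β (fun w => w ^ n) := by
      unfold tiltedLim
      simp_rw [Polynomial.eval_monomial]
      rw [mul_left_comm a, ← integral_const_mul a]
      simp_rw [mul_left_comm a]
    have e2 : tilted β μ (fun w => (Polynomial.monomial n a).eval w)
        = fun z => a * tilted β μ (fun w => w ^ n) z := by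
      ext z
      unfold tilted
      simp_rw [Polynomial.eval_monomial]
      rw [mul_left_comm a, ← integral_const_mul a]
      simp_rw [mul_left_comm a]
    rw [e1, e2]
    exact (tilted_monomial hβ0 hβ1 hsupp hlap n).const_mul a

/-- Karamata's theorem in the form used here: the tilted measures converge weakly. Polynomials in
`e^{-u}` are handled by the Laplace transform, and Weierstrass approximation does the rest, since
the tilted measures have bounded total mass. -/
lemma tilted_tendsto (hβ0 : 0 < β) (hβ1 : β < 1) (hsupp : μ (Iic 0) = 0)
    (hlap : ∀ r : ℝ, 0 ≤ r → ∫ s, Real.exp (-(r * s)) ∂μ = Real.exp (-(r ^ β)))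
    {h : ℝ → ℝ} (hc : Continuous h) :
    Tendsto (tilted β μ h) atTop (𝓝 (tiltedLim β h)) := by
  have hΓ : 0 < Real.Gamma (1 - β) := Real.Gamma_pos_of_pos (by linarith)
  rw [Metric.tendsto_atTop']
  intro ε hε
  obtain ⟨p, hp⟩ := exists_polynomial_near_of_continuousOn 0 1 h hc.continuousOn (ε / 4)
    (by positivity)
  have hlimd : |tiltedLim β (fun w => p.eval w) - tiltedLim β h| ≤ ε / 4 := by
    unfold tiltedLim
    rw [← mul_sub, ← integral_sub (tiltedLim_integrable hβ0 hβ1 p.continuous)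
      (tiltedLim_integrable hβ0 hβ1 hc), abs_mul, abs_of_pos (by positivity)]
    have hb := one_sub_exp_integrable hβ0 hβ1 zero_le_one
    have hv := one_sub_exp_integral hβ0 hβ1 zero_le_one
    simp only [one_mul, Real.one_rpow] at hb hv
    have : |∫ u in Ioi (0:ℝ), ((1 - Real.exp (-u)) * u ^ (-β - 1) * p.eval (Real.exp (-u))
        - (1 - Real.exp (-u)) * u ^ (-β - 1) * h (Real.exp (-u)))|
        ≤ ∫ u in Ioi (0:ℝ), (1 - Real.exp (-u)) * u ^ (-β - 1) * (ε / 4) := by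
      rw [← Real.norm_eq_abs]
      refine norm_integral_le_of_norm_le (Integrable.mul_const hb _) ?_
      filter_upwards [ae_restrict_mem measurableSet_Ioi] with u hu
      have hu0 : 0 < u := hu
      have e2 : Real.exp (-u) ≤ 1 := Real.exp_le_one_iff.2 (by linarith)
      rw [← mul_sub, norm_mul, Real.norm_of_nonneg (mul_nonneg (by linarith) (by positivity))]
      exact mul_le_mul_of_nonneg_left (hp _ ⟨(Real.exp_pos _).le, e2⟩).le
        (mul_nonneg (by linarith) (by positivity))
    rw [integral_mul_const, hv] at this
    calc _ ≤ β / Real.Gamma (1 - β) * (Real.Gamma (1 - β) / β * (ε / 4)) := by gcongr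
      _ = ε / 4 := by field_simp
  have hd : ∀ z : ℝ, 0 < z → |tilted β μ (fun w => p.eval w) z - tilted β μ h z| ≤ ε / 4 := by
    intro z hz
    unfold tilted
    rw [← mul_sub, ← integral_sub (tilted_integrable hsupp hz p.continuous)
      (tilted_integrable hsupp hz hc), abs_mul, abs_of_pos (by positivity)]
    have hi := laplace_integrable hsupp (inv_nonneg.2 hz.le)
    have hle := Real.add_one_le_exp (-(z⁻¹ ^ β))
    have : |∫ s, ((1 - Real.exp (-(z⁻¹ * s))) * p.eval (Real.exp (-(z⁻¹ * s)))
        - (1 - Real.exp (-(z⁻¹ * s))) * h (Real.exp (-(z⁻¹ * s)))) ∂μ|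
        ≤ ∫ s, (1 - Real.exp (-(z⁻¹ * s))) * (ε / 4) ∂μ := by
      have hint : Integrable (fun s => (1 - Real.exp (-(z⁻¹ * s))) * (ε / 4)) μ :=
        ((integrable_const 1).sub hi).mul_const _
      rw [← Real.norm_eq_abs]
      refine norm_integral_le_of_norm_le hint ?_
      filter_upwards [ae_pos hsupp] with s hs
      have e2 : Real.exp (-(z⁻¹ * s)) ≤ 1 := Real.exp_le_one_iff.2 (by
        have : 0 < z⁻¹ * s := by positivity
        linarith)
      rw [← mul_sub, norm_mul, Real.norm_of_nonneg (by linarith)]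
      exact mul_le_mul_of_nonneg_left (hp _ ⟨(Real.exp_pos _).le, e2⟩).le (by linarith)
    rw [integral_mul_const, integral_sub (integrable_const 1) hi, hlap _ (by positivity)] at this
    simp only [integral_const, probReal_univ, smul_eq_mul, mul_one] at this
    calc _ ≤ z ^ β * (z⁻¹ ^ β * (ε / 4)) := by
          gcongr
          exact this.trans (by gcongr; linarith)
      _ = ε / 4 := by
        rw [Real.inv_rpow hz.le]
        have := Real.rpow_pos_of_pos hz β
        field_simp
  obtain ⟨N, hN⟩ := Metric.tendsto_atTop'.1 (tilted_poly hβ0 hβ1 hsupp hlap p) (ε / 4)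
    (by positivity)
  refine ⟨max N 0, fun z hz => ?_⟩
  have h1 := hN z ((le_max_left _ _).trans_lt hz)
  have h2 := hd z ((le_max_right _ _).trans_lt hz)
  rw [Real.dist_eq] at h1 ⊢
  rw [abs_le] at hlimd h2
  rw [abs_lt] at h1 ⊢
  constructor <;> linarith [hlimd.1, hlimd.2, h1.1, h1.2, h2.1, h2.2]

end stable

/-! ### Tails of the stable law -/

section stable
variable {β : ℝ} {μ : Measure ℝ} [IsProbabilityMeasure μ]

/-- The tail of the Lévy measure. -/
lemma levy_tail (hβ0 : 0 < β) (hβ1 : β < 1) {x : ℝ} (hx : 0 < x) :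
    β / Real.Gamma (1 - β) * ∫ u in Ioi x, u ^ (-β - 1) = x ^ (-β) / Real.Gamma (1 - β) := by
  have hΓ : 0 < Real.Gamma (1 - β) := Real.Gamma_pos_of_pos (by linarith)
  rw [integral_Ioi_rpow_of_lt (by linarith) hx, show -β - 1 + 1 = -β by ring]
  field_simp

/-- A continuous test function squeezed between the indicators of `(a, ∞)` and `[b, ∞)` brackets
the rescaled tails of `μ` by those of the Lévy measure. -/
lemma tail_bracket (hβ0 : 0 < β) (hβ1 : β < 1) (hsupp : μ (Iic 0) = 0) {a b : ℝ} (ha : 0 < a)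
    (hab : a < b) :
    ∃ h : ℝ → ℝ, Continuous h ∧ b ^ (-β) / Real.Gamma (1 - β) ≤ tiltedLim β h ∧
      tiltedLim β h ≤ a ^ (-β) / Real.Gamma (1 - β) ∧
      ∀ z : ℝ, 0 < z → z ^ β * μ.real (Ici (b * z)) ≤ tilted β μ h z ∧
        tilted β μ h z ≤ z ^ β * μ.real (Ioi (a * z)) := by
  have hΓ : 0 < Real.Gamma (1 - β) := Real.Gamma_pos_of_pos (by linarith)
  have hA1 : Real.exp (-a) < 1 := by rw [Real.exp_lt_one_iff]; linarith
  have hBA : Real.exp (-b) < Real.exp (-a) := Real.exp_lt_exp.2 (by linarith)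
  set A := Real.exp (-a) with hA
  set B := Real.exp (-b) with hB
  -- In the variable `w = e^{-u}`, `k` interpolates linearly from `0` at `u = a` to `1` at `u = b`;
  -- dividing by `1 - w` compensates the tilt.
  let k : ℝ → ℝ := fun w => max 0 (min 1 ((A - w) / (A - B)))
  let h : ℝ → ℝ := fun w => k w / max (1 - w) (1 - A)
  have hmax : ∀ w, 0 < max (1 - w) (1 - A) := fun w => lt_max_of_lt_right (by linarith)
  have hkc : Continuous k := by fun_prop
  have hc : Continuous h := hkc.div (by fun_prop) fun w => (hmax w).ne'
  have hk0 : ∀ w, 0 ≤ k w := fun w => le_max_left _ _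
  have hk1 : ∀ w, k w ≤ 1 := fun w => max_le zero_le_one (min_le_left _ _)
  have hkA : ∀ w, A ≤ w → k w = 0 := fun w hw =>
    max_eq_left ((min_le_right _ _).trans (div_nonpos_of_nonpos_of_nonneg (by linarith)
      (by linarith)))
  have hkB : ∀ w, w ≤ B → k w = 1 := fun w hw => by
    have : 1 ≤ (A - w) / (A - B) := by rw [one_le_div (by linarith)]; linarith
    simp [k, min_eq_left this]
  have hkh : ∀ w, (1 - w) * h w = k w := by
    intro w
    rcases le_total A w with hw | hw
    · simp [h, hkA w hw]
    · have : max (1 - w) (1 - A) = 1 - w := max_eq_left (by linarith)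
      simp only [h, this]
      have : 1 - w ≠ 0 := by linarith
      field_simp
  have hlow : ∀ u, (Ici b).indicator (fun _ => (1:ℝ)) u ≤ k (Real.exp (-u)) := by
    intro u
    by_cases hu : u ∈ Ici b
    · rw [indicator_of_mem hu, hkB _ (Real.exp_le_exp.2 (neg_le_neg hu))]
    · rw [indicator_of_notMem hu]; exact hk0 _
  have hup : ∀ u, k (Real.exp (-u)) ≤ (Ioi a).indicator (fun _ => (1:ℝ)) u := by
    intro u
    by_cases hu : u ∈ Ioi a
    · rw [indicator_of_mem hu]; exact hk1 _
    · rw [indicator_of_notMem hu, hkA _ (Real.exp_le_exp.2 (neg_le_neg (not_lt.1 hu)))]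
  have hki := tiltedLim_integrable hβ0 hβ1 hc
  have hform : ∀ u : ℝ, (1 - Real.exp (-u)) * u ^ (-β - 1) * h (Real.exp (-u))
      = k (Real.exp (-u)) * u ^ (-β - 1) := by
    intro u; rw [← hkh]; ring
  simp_rw [hform] at hki
  refine ⟨h, hc, ?_, ?_, fun z hz => ?_⟩
  · rw [← levy_tail hβ0 hβ1 (ha.trans hab)]
    unfold tiltedLim
    simp_rw [hform]
    have h1 : ∫ u in Ioi b, u ^ (-β - 1) = ∫ u in Ioi b, k (Real.exp (-u)) * u ^ (-β - 1) := by
      refine setIntegral_congr_fun measurableSet_Ioi fun u hu => ?_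
      rw [hkB _ (Real.exp_le_exp.2 (neg_le_neg (le_of_lt hu))), one_mul]
    rw [h1]
    refine mul_le_mul_of_nonneg_left ?_ (by positivity)
    refine setIntegral_mono_set hki ?_ (Ioi_subset_Ioi (ha.trans hab).le).eventuallyLE
    filter_upwards [ae_restrict_mem measurableSet_Ioi] with u hu
    exact mul_nonneg (hk0 _) (Real.rpow_nonneg (le_of_lt hu) _)
  · rw [← levy_tail hβ0 hβ1 ha]
    unfold tiltedLim
    simp_rw [hform]
    gcongr
    have h1 : ∫ u in Ioi (0:ℝ), k (Real.exp (-u)) * u ^ (-β - 1)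
        = ∫ u in Ioi a, k (Real.exp (-u)) * u ^ (-β - 1) := by
      refine setIntegral_eq_of_subset_of_forall_sdiff_eq_zero measurableSet_Ioi
        (Ioi_subset_Ioi ha.le) fun u hu => ?_
      rw [hkA _ (Real.exp_le_exp.2 (neg_le_neg (not_lt.1 hu.2))), zero_mul]
    rw [h1]
    refine setIntegral_mono_on (hki.mono_set (Ioi_subset_Ioi ha.le))
      (integrableOn_Ioi_rpow_of_lt (by linarith) ha) measurableSet_Ioi fun u hu => ?_
    have hu0 : 0 < u := ha.trans hu
    exact mul_le_of_le_one_left (by positivity) (hk1 _)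
  · have hti := tilted_integrable hsupp hz hc
    unfold tilted
    simp_rw [hkh] at hti ⊢
    have e1 : ∀ s, (Ici (b * z)).indicator (fun _ => (1:ℝ)) s ≤ k (Real.exp (-(z⁻¹ * s))) := by
      intro s
      refine le_trans (le_of_eq ?_) (hlow _)
      simp only [indicator, mem_Ici, inv_mul_eq_div, le_div_iff₀ hz]
    have e2 : ∀ s, k (Real.exp (-(z⁻¹ * s))) ≤ (Ioi (a * z)).indicator (fun _ => (1:ℝ)) s := by
      intro s
      refine le_trans (hup _) (le_of_eq ?_)
      simp only [indicator, mem_Ioi, inv_mul_eq_div, lt_div_iff₀ hz]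
    constructor
    · gcongr
      have := integral_mono ((integrable_const 1).indicator measurableSet_Ici) hti e1
      rwa [integral_indicator_const _ measurableSet_Ici, smul_eq_mul, mul_one] at this
    · gcongr
      have := integral_mono hti ((integrable_const 1).indicator measurableSet_Ioi) e2
      rwa [integral_indicator_const _ measurableSet_Ioi, smul_eq_mul, mul_one] at this

/-- The tail of the stable law is asymptotic to that of its Lévy measure. -/
lemma tail_tendsto (hβ0 : 0 < β) (hβ1 : β < 1) (hsupp : μ (Iic 0) = 0)
    (hlap : ∀ r : ℝ, 0 ≤ r → ∫ s, Real.exp (-(r * s)) ∂μ = Real.exp (-(r ^ β))) {x : ℝ}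
    (hx : 0 < x) :
    Tendsto (fun z => z ^ β * μ.real (Ioi (x * z))) atTop
        (𝓝 (x ^ (-β) / Real.Gamma (1 - β))) ∧
      Tendsto (fun z => z ^ β * μ.real (Ici (x * z))) atTop
        (𝓝 (x ^ (-β) / Real.Gamma (1 - β))) := by
  have hcont : Tendsto (fun y : ℝ => y ^ (-β) / Real.Gamma (1 - β)) (𝓝 x)
      (𝓝 (x ^ (-β) / Real.Gamma (1 - β))) :=
    (Real.continuousAt_rpow_const _ _ (Or.inl hx.ne')).div_const _
  have hmono : ∀ z : ℝ, 0 < z →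
      z ^ β * μ.real (Ioi (x * z)) ≤ z ^ β * μ.real (Ici (x * z)) := by
    intro z hz
    exact mul_le_mul_of_nonneg_left (measureReal_mono Ioi_subset_Ici_self) (by positivity)
  have hlow : ∀ l < x ^ (-β) / Real.Gamma (1 - β),
      ∀ᶠ z in atTop, l < z ^ β * μ.real (Ioi (x * z)) := by
    intro l hl
    have h1 : ∀ᶠ y in 𝓝[>] x, l < y ^ (-β) / Real.Gamma (1 - β) :=
      (hcont.mono_left nhdsWithin_le_nhds).eventually_const_lt hl
    obtain ⟨b, hlb, hb⟩ := (h1.and self_mem_nhdsWithin).exists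
    obtain ⟨h, hc, h2, -, h3⟩ := tail_bracket (μ := μ) hβ0 hβ1 hsupp hx hb
    filter_upwards [(tilted_tendsto hβ0 hβ1 hsupp hlap hc).eventually_const_lt (hlb.trans_le h2),
      eventually_gt_atTop 0] with z hz hz0
    exact hz.trans_le (h3 z hz0).2
  have hupp : ∀ l > x ^ (-β) / Real.Gamma (1 - β),
      ∀ᶠ z in atTop, z ^ β * μ.real (Ici (x * z)) < l := by
    intro l hl
    have h1 : ∀ᶠ y in 𝓝[<] x, y ^ (-β) / Real.Gamma (1 - β) < l :=
      (hcont.mono_left nhdsWithin_le_nhds).eventually_lt_const hl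
    have h0 : ∀ᶠ y in 𝓝[<] x, 0 < y := nhdsWithin_le_nhds (eventually_gt_nhds hx)
    obtain ⟨a, ⟨hla, ha⟩, ha0⟩ := ((h1.and self_mem_nhdsWithin).and h0).exists
    obtain ⟨h, hc, -, h2, h3⟩ := tail_bracket (μ := μ) hβ0 hβ1 hsupp ha0 ha
    filter_upwards [(tilted_tendsto hβ0 hβ1 hsupp hlap hc).eventually_lt_const (h2.trans_lt hla),
      eventually_gt_atTop 0] with z hz hz0
    exact (h3 z hz0).1.trans_lt hz
  constructor
  · refine tendsto_order.2 ⟨hlow, fun l hl => ?_⟩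
    filter_upwards [hupp l hl, eventually_gt_atTop 0] with z hz hz0
    exact (hmono z hz0).trans_lt hz
  · refine tendsto_order.2 ⟨fun l hl => ?_, hupp⟩
    filter_upwards [hlow l hl, eventually_gt_atTop 0] with z hz hz0
    exact hz.trans_le (hmono z hz0)

end stable

/-! ### Tail asymptotics give moment asymptotics -/

lemma lintegral_rpow_Ioo {γ : ℝ} (hγ : 0 < γ) {x : ℝ} (hx : 0 < x) :
    ∫⁻ v in Ioo 0 x, ENNReal.ofReal (γ * v ^ (γ - 1)) = ENNReal.ofReal (x ^ γ) := by
  have hi : IntegrableOn (fun v : ℝ => γ * v ^ (γ - 1)) (Ioc 0 x) := by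
    refine Integrable.const_mul ?_ γ
    have := intervalIntegral.intervalIntegrable_rpow' (a := 0) (b := x) (r := γ - 1) (by linarith)
    rwa [intervalIntegrable_iff_integrableOn_Ioc_of_le hx.le] at this
  rw [restrict_Ioo_eq_restrict_Ioc, ← ofReal_integral_eq_lintegral_ofReal hi]
  · congr 1
    rw [← intervalIntegral.integral_of_le hx.le, intervalIntegral.integral_const_mul,
      integral_rpow (Or.inl (by linarith)), sub_add_cancel, Real.zero_rpow hγ.ne']
    field_simp
    ring
  · filter_upwards [ae_restrict_mem measurableSet_Ioc] with v hv
    have : 0 < v := hv.1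
    positivity

/-- Writing `u^γ = ∫_0^u γ v^{γ-1} dv` and applying Tonelli turns a moment of `φ dν` into a
weighted integral of the tails of `φ dν`. -/
lemma moment_eq_tails (ν : Measure ℝ) [SFinite ν] (hν : ∀ᵐ u ∂ν, 0 < u) {γ : ℝ} (hγ : 0 < γ)
    {φ : ℝ → ℝ} (hφ : Measurable φ) :
    ∫⁻ u, ENNReal.ofReal (u ^ γ * φ u) ∂ν
      = ∫⁻ v in Ioi (0:ℝ), ENNReal.ofReal (γ * v ^ (γ - 1)) *
          ∫⁻ u in Ioi v, ENNReal.ofReal (φ u) ∂ν := by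
  let g : ℝ → ℝ → ℝ≥0∞ := fun u v => {p : ℝ × ℝ | p.2 < p.1}.indicator
    (fun p => ENNReal.ofReal (γ * p.2 ^ (γ - 1)) * ENNReal.ofReal (φ p.1)) (u, v)
  have hg : Measurable (Function.uncurry g) := by
    refine Measurable.indicator ?_ (measurableSet_lt measurable_snd measurable_fst)
    fun_prop
  have h1 : ∀ᵐ u ∂ν, ENNReal.ofReal (u ^ γ * φ u) = ∫⁻ v in Ioi (0:ℝ), g u v := by
    filter_upwards [hν] with u hu
    rw [ENNReal.ofReal_mul (by positivity), ← lintegral_rpow_Ioo hγ hu,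
      ← lintegral_mul_const _ (by fun_prop), ← Iio_inter_Ioi,
      ← Measure.restrict_restrict measurableSet_Iio,
      ← lintegral_indicator measurableSet_Iio]
    rfl
  rw [lintegral_congr_ae h1, lintegral_lintegral_swap hg.aemeasurable]
  refine lintegral_congr fun v => ?_
  rw [← lintegral_const_mul _ (by fun_prop), ← lintegral_indicator measurableSet_Ioi]
  rfl

/-- The Lévy measure `β / Γ(1 - β) u^{-β - 1} du` on `(0, ∞)` of the `β`-stable subordinator. -/
noncomputable def levy (β : ℝ) : Measure ℝ :=
  (volume.restrict (Ioi 0)).withDensity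
    (fun u => ENNReal.ofReal (β / Real.Gamma (1 - β) * u ^ (-β - 1)))

/-- `z^β` times the image of `μ` under `s ↦ s / z`. -/
noncomputable def rescaled (β : ℝ) (μ : Measure ℝ) (z : ℝ) : Measure ℝ :=
  ENNReal.ofReal (z ^ β) • μ.map (fun s => z⁻¹ * s)

/-- An upper set bounded below by `v` is empty or a half-line. -/
lemma upper_set_cases {v : ℝ} {E : Set ℝ} (hE : E ⊆ Ioi v) (hup : IsUpperSet E) :
    E = ∅ ∨ ∃ U, v ≤ U ∧ (E = Ioi U ∨ E = Ici U) := by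
  rcases E.eq_empty_or_nonempty with h | h
  · exact Or.inl h
  refine Or.inr ⟨sInf E, le_csInf h fun b hb => (hE hb).le, ?_⟩
  have hbdd : BddBelow E := ⟨v, fun b hb => (hE hb).le⟩
  have h1 : Ioi (sInf E) ⊆ E := fun x hx => by
    obtain ⟨y, hy, hyx⟩ := exists_lt_of_csInf_lt h hx
    exact hup hyx.le hy
  have h2 : E ⊆ Ici (sInf E) := fun x hx => csInf_le hbdd hx
  by_cases hm : sInf E ∈ E
  · exact Or.inr (h2.antisymm fun x hx => hup hx hm)
  · refine Or.inl (Subset.antisymm (fun x hx => mem_Ioi.2 (lt_of_le_of_ne (h2 hx) ?_)) h1)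
    exact fun h' => hm (h' ▸ hx)

section stable
variable {β : ℝ} {μ : Measure ℝ} [IsProbabilityMeasure μ]

lemma levy_Ioi (hβ0 : 0 < β) (hβ1 : β < 1) {x : ℝ} (hx : 0 < x) :
    levy β (Ioi x) = ENNReal.ofReal (x ^ (-β) / Real.Gamma (1 - β)) := by
  have hΓ : 0 < Real.Gamma (1 - β) := Real.Gamma_pos_of_pos (by linarith)
  rw [levy, withDensity_apply _ measurableSet_Ioi, Measure.restrict_restrict measurableSet_Ioi,
    inter_eq_left.2 (Ioi_subset_Ioi hx.le), ← levy_tail hβ0 hβ1 hx, ← integral_const_mul,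
    ofReal_integral_eq_lintegral_ofReal
      ((integrableOn_Ioi_rpow_of_lt (by linarith) hx).const_mul _)]
  filter_upwards [ae_restrict_mem measurableSet_Ioi] with u hu
  have : 0 < u := hx.trans hu
  positivity

lemma levy_Ici (hβ0 : 0 < β) (hβ1 : β < 1) {x : ℝ} (hx : 0 < x) :
    levy β (Ici x) = ENNReal.ofReal (x ^ (-β) / Real.Gamma (1 - β)) := by
  rw [← levy_Ioi hβ0 hβ1 hx]
  have hac : levy β ≪ volume :=
    (withDensity_absolutelyContinuous _ _).trans Measure.absolutelyContinuous_restrict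
  exact measure_congr (hac.ae_eq Ioi_ae_eq_Ici.symm)

lemma levy_pos : ∀ᵐ u ∂(levy β), 0 < u :=
  (withDensity_absolutelyContinuous _ _).ae_le (ae_restrict_mem measurableSet_Ioi)

omit [IsProbabilityMeasure μ] in
lemma rescaled_pos (hsupp : μ (Iic 0) = 0) {z : ℝ} (hz : 0 < z) :
    ∀ᵐ u ∂(rescaled β μ z), 0 < u := by
  refine Measure.ae_smul_measure ?_ _
  rw [ae_map_iff (by fun_prop) measurableSet_Ioi]
  filter_upwards [ae_pos hsupp] with s hs
  positivity

lemma rescaled_Ioi {x z : ℝ} (hz : 0 < z) :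
    rescaled β μ z (Ioi x) = ENNReal.ofReal (z ^ β * μ.real (Ioi (x * z))) := by
  have : (fun s => z⁻¹ * s) ⁻¹' Ioi x = Ioi (x * z) := by
    ext s; simp [inv_mul_eq_div, lt_div_iff₀ hz]
  rw [rescaled, Measure.smul_apply, Measure.map_apply (by fun_prop) measurableSet_Ioi, this,
    ENNReal.ofReal_mul (by positivity), ofReal_measureReal, smul_eq_mul]

lemma rescaled_Ici {x z : ℝ} (hz : 0 < z) :
    rescaled β μ z (Ici x) = ENNReal.ofReal (z ^ β * μ.real (Ici (x * z))) := by
  have : (fun s => z⁻¹ * s) ⁻¹' Ici x = Ici (x * z) := by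
    ext s; simp [inv_mul_eq_div, le_div_iff₀ hz]
  rw [rescaled, Measure.smul_apply, Measure.map_apply (by fun_prop) measurableSet_Ici, this,
    ENNReal.ofReal_mul (by positivity), ofReal_measureReal, smul_eq_mul]

lemma rescaled_Ioi_le (hsupp : μ (Iic 0) = 0)
    (hlap : ∀ r : ℝ, 0 ≤ r → ∫ s, Real.exp (-(r * s)) ∂μ = Real.exp (-(r ^ β)))
    {x z : ℝ} (hx : 0 < x) (hz : 0 < z) :
    rescaled β μ z (Ioi x) ≤ ENNReal.ofReal ((1 - Real.exp (-1))⁻¹ * x ^ (-β)) := by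
  rw [rescaled_Ioi hz]
  refine ENNReal.ofReal_le_ofReal ?_
  have h := (measureReal_mono Ioi_subset_Ici_self).trans (tail_Ici_le (x := x * z) hsupp hlap (by positivity))
  calc _ ≤ z ^ β * ((1 - Real.exp (-1))⁻¹ * (x * z) ^ (-β)) := by gcongr
    _ = _ := by
      rw [Real.mul_rpow hx.le hz.le, Real.rpow_neg hz.le]
      have := Real.rpow_pos_of_pos hz β
      field_simp

/-- Convergence of the rescaled measures on every set `(v, ∞) ∩ {t < φ}` with `φ` antitone: the
complement of such a set in `(v, ∞)` is a half-line. -/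
lemma rescaled_superlevel (hβ0 : 0 < β) (hβ1 : β < 1) (hsupp : μ (Iic 0) = 0)
    (hlap : ∀ r : ℝ, 0 ≤ r → ∫ s, Real.exp (-(r * s)) ∂μ = Real.exp (-(r ^ β)))
    {φ : ℝ → ℝ} (hφ : Antitone φ) {v : ℝ} (hv : 0 < v) (t : ℝ) :
    Tendsto (fun z => (rescaled β μ z).restrict (Ioi v) {u | t < φ u}) atTop
      (𝓝 ((levy β).restrict (Ioi v) {u | t < φ u})) := by
  set E : Set ℝ := Ioi v ∩ {u | φ u ≤ t}
  have hEm : MeasurableSet E := measurableSet_Ioi.inter (hφ.measurable measurableSet_Iic)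
  have hDm : MeasurableSet {u | t < φ u} := hφ.measurable measurableSet_Ioi
  have hset : {u | t < φ u} ∩ Ioi v = Ioi v \ E := by
    ext u
    simp only [E, mem_inter_iff, mem_ofPred_eq, Set.mem_sdiff, mem_Ioi, not_and, not_le]
    tauto
  have hES : E ⊆ Ioi v := inter_subset_left
  have hIoi : ∀ x, 0 < x → Tendsto (fun z => rescaled β μ z (Ioi x)) atTop
      (𝓝 (levy β (Ioi x))) := by
    intro x hx
    rw [levy_Ioi hβ0 hβ1 hx]
    refine (ENNReal.tendsto_ofReal (tail_tendsto hβ0 hβ1 hsupp hlap hx).1).congr' ?_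
    filter_upwards [eventually_gt_atTop 0] with z hz using (rescaled_Ioi hz).symm
  have hIci : ∀ x, 0 < x → Tendsto (fun z => rescaled β μ z (Ici x)) atTop
      (𝓝 (levy β (Ici x))) := by
    intro x hx
    rw [levy_Ici hβ0 hβ1 hx]
    refine (ENNReal.tendsto_ofReal (tail_tendsto hβ0 hβ1 hsupp hlap hx).2).congr' ?_
    filter_upwards [eventually_gt_atTop 0] with z hz using (rescaled_Ici hz).symm
  have hE : Tendsto (fun z => rescaled β μ z E) atTop (𝓝 (levy β E)) := by
    rcases upper_set_cases hES (fun a b hab ha => ⟨lt_of_lt_of_le ha.1 hab, (hφ hab).trans ha.2⟩)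
      with h | ⟨U, hU, h | h⟩
    · simp [h]
    · rw [h]; exact hIoi U (hv.trans_le hU)
    · rw [h]; exact hIci U (hv.trans_le hU)
  have hfin : levy β (Ioi v) ≠ ∞ := by rw [levy_Ioi hβ0 hβ1 hv]; exact ENNReal.ofReal_ne_top
  have hfinE : levy β E ≠ ∞ := measure_ne_top_of_subset hES hfin
  rw [Measure.restrict_apply hDm, hset, measure_sdiff hES hEm.nullMeasurableSet hfinE]
  refine (ENNReal.Tendsto.sub (hIoi v hv) hE (Or.inl hfin)).congr' ?_
  filter_upwards [eventually_gt_atTop 0] with z hz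
  rw [Measure.restrict_apply hDm, hset, measure_sdiff hES hEm.nullMeasurableSet]
  refine measure_ne_top_of_subset hES ?_
  rw [rescaled_Ioi hz]; exact ENNReal.ofReal_ne_top

lemma rescaled_tail_integral (hβ0 : 0 < β) (hβ1 : β < 1) (hsupp : μ (Iic 0) = 0)
    (hlap : ∀ r : ℝ, 0 ≤ r → ∫ s, Real.exp (-(r * s)) ∂μ = Real.exp (-(r ^ β)))
    {φ : ℝ → ℝ} (hφ : Antitone φ) (hφ0 : ∀ u, 0 ≤ φ u) {B : ℝ} (hφB : ∀ u, φ u ≤ B)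
    {v : ℝ} (hv : 0 < v) :
    Tendsto (fun z => ∫⁻ u in Ioi v, ENNReal.ofReal (φ u) ∂(rescaled β μ z)) atTop
      (𝓝 (∫⁻ u in Ioi v, ENNReal.ofReal (φ u) ∂(levy β))) := by
  have hlay : ∀ ν : Measure ℝ, ∫⁻ u in Ioi v, ENNReal.ofReal (φ u) ∂ν
      = ∫⁻ t in Ioi 0, ν.restrict (Ioi v) {u | t < φ u} := fun ν =>
    lintegral_eq_lintegral_meas_lt _ (Eventually.of_forall hφ0) hφ.measurable.aemeasurable
  simp_rw [hlay]
  set C := ENNReal.ofReal ((1 - Real.exp (-1))⁻¹ * v ^ (-β))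
  refine tendsto_lintegral_filter_of_dominated_convergence ((Iio B).indicator fun _ => C) ?_ ?_ ?_ ?_
  · refine Eventually.of_forall fun z => Antitone.measurable fun t t' h => ?_
    exact measure_mono fun u hu => lt_of_le_of_lt h hu
  · filter_upwards [eventually_gt_atTop 0] with z hz
    refine Eventually.of_forall fun t => ?_
    by_cases ht : t < B
    · rw [indicator_of_mem (mem_Iio.2 ht)]
      refine (measure_mono (subset_univ _)).trans ?_
      rw [Measure.restrict_apply_univ]
      exact rescaled_Ioi_le hsupp hlap hv hz
    · have : {u | t < φ u} = ∅ := by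
        ext u; simpa using (hφB u).trans (not_lt.1 ht)
      rw [this, measure_empty]
      exact zero_le
  · rw [lintegral_indicator_const measurableSet_Iio]
    refine ENNReal.mul_ne_top ENNReal.ofReal_ne_top ?_
    rw [Measure.restrict_apply measurableSet_Iio, Iio_inter_Ioi, Real.volume_Ioo]
    exact ENNReal.ofReal_ne_top
  · exact Eventually.of_forall fun t => rescaled_superlevel hβ0 hβ1 hsupp hlap hφ hv t

/-- The tails of `φ dν` converge for every `v > 0`; the tail bound dominates them by a multiple of
`v^{γ-β-1} φ v`. -/
lemma rescaled_moment (hβ0 : 0 < β) (hβ1 : β < 1) (hsupp : μ (Iic 0) = 0)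
    (hlap : ∀ r : ℝ, 0 ≤ r → ∫ s, Real.exp (-(r * s)) ∂μ = Real.exp (-(r ^ β)))
    {φ : ℝ → ℝ} (hφ : Antitone φ) (hφ0 : ∀ u, 0 ≤ φ u) {B : ℝ} (hφB : ∀ u, φ u ≤ B)
    {γ : ℝ} (hγ : 0 < γ) (hint : IntegrableOn (fun u : ℝ => u ^ (γ - β - 1) * φ u) (Ioi 0)) :
    Tendsto (fun z => ∫⁻ u, ENNReal.ofReal (u ^ γ * φ u) ∂(rescaled β μ z)) atTop
      (𝓝 (∫⁻ u, ENNReal.ofReal (u ^ γ * φ u) ∂(levy β))) := by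
  have hφm := hφ.measurable
  have : SFinite (levy β) := by unfold levy; infer_instance
  rw [moment_eq_tails (levy β) levy_pos hγ hφm]
  set K := (1 - Real.exp (-1))⁻¹
  have hK : 0 ≤ K := by
    have : Real.exp (-1) < 1 := by rw [Real.exp_lt_one_iff]; norm_num
    exact inv_nonneg.2 (by linarith)
  have key : Tendsto (fun z => ∫⁻ v in Ioi (0:ℝ), ENNReal.ofReal (γ * v ^ (γ - 1)) *
          ∫⁻ u in Ioi v, ENNReal.ofReal (φ u) ∂(rescaled β μ z)) atTop
      (𝓝 (∫⁻ v in Ioi (0:ℝ), ENNReal.ofReal (γ * v ^ (γ - 1)) *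
          ∫⁻ u in Ioi v, ENNReal.ofReal (φ u) ∂(levy β))) := by
    refine tendsto_lintegral_filter_of_dominated_convergence
      (fun v => ENNReal.ofReal (γ * K * (v ^ (γ - β - 1) * φ v))) ?_ ?_ ?_ ?_
    · refine Eventually.of_forall fun z => Measurable.mul (by fun_prop) ?_
      exact Antitone.measurable fun a b h => lintegral_mono_set (Ioi_subset_Ioi h)
    · filter_upwards [eventually_gt_atTop 0] with z hz
      filter_upwards [ae_restrict_mem measurableSet_Ioi] with v hv
      have hv0 : 0 < v := hv
      have h1 : ∫⁻ u in Ioi v, ENNReal.ofReal (φ u) ∂(rescaled β μ z)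
          ≤ ENNReal.ofReal (φ v) * ENNReal.ofReal (K * v ^ (-β)) := by
        refine (setLIntegral_mono measurable_const
          (fun u hu => ENNReal.ofReal_le_ofReal (hφ (mem_Ioi.1 hu).le))).trans ?_
        rw [setLIntegral_const]
        gcongr
        exact rescaled_Ioi_le hsupp hlap hv0 hz
      refine (mul_le_mul_right h1 _).trans (le_of_eq ?_)
      rw [← ENNReal.ofReal_mul (hφ0 _), ← ENNReal.ofReal_mul (by positivity)]
      congr 1
      rw [show γ - β - 1 = (γ - 1) + -β by ring, Real.rpow_add hv0]
      ring
    · refine (lintegral_ofReal_ne_top_iff_integrable (by fun_prop) ?_).2 (hint.const_mul _)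
      filter_upwards [ae_restrict_mem measurableSet_Ioi] with v hv
      have hv0 : 0 < v := hv
      have := hφ0 v
      positivity
    · filter_upwards [ae_restrict_mem measurableSet_Ioi] with v hv
      exact ENNReal.Tendsto.const_mul
        (rescaled_tail_integral hβ0 hβ1 hsupp hlap hφ hφ0 hφB hv) (Or.inr ENNReal.ofReal_ne_top)
  refine key.congr' ?_
  filter_upwards [eventually_gt_atTop 0] with z hz
  have : SFinite (rescaled β μ z) := by unfold rescaled; infer_instance
  rw [moment_eq_tails _ (rescaled_pos hsupp hz) hγ hφm]

/-- The regime `γ > β`, where the heavy tail of `μ` dominates. -/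
lemma core_heavy (hβ0 : 0 < β) (hβ1 : β < 1) (hsupp : μ (Iic 0) = 0)
    (hlap : ∀ r : ℝ, 0 ≤ r → ∫ s, Real.exp (-(r * s)) ∂μ = Real.exp (-(r ^ β)))
    {φ : ℝ → ℝ} (hφ : Antitone φ) (hφ0 : ∀ u, 0 ≤ φ u) {B : ℝ} (hφB : ∀ u, φ u ≤ B)
    {γ : ℝ} (hγ : 0 < γ) (hint : IntegrableOn (fun u : ℝ => u ^ (γ - β - 1) * φ u) (Ioi 0)) :
    Tendsto (fun z => z ^ (β - γ) * ∫ s, s ^ γ * φ (z⁻¹ * s) ∂μ) atTop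
      (𝓝 (β / Real.Gamma (1 - β) * ∫ u in Ioi (0:ℝ), u ^ (γ - β - 1) * φ u)) := by
  have hφm := hφ.measurable
  have hΓ : 0 < Real.Gamma (1 - β) := Real.Gamma_pos_of_pos (by linarith)
  have hlim : ∫⁻ u, ENNReal.ofReal (u ^ γ * φ u) ∂(levy β)
      = ENNReal.ofReal (β / Real.Gamma (1 - β) * ∫ u in Ioi (0:ℝ), u ^ (γ - β - 1) * φ u) := by
    rw [levy, lintegral_withDensity_eq_lintegral_mul _ (by fun_prop) (by fun_prop),
      ← integral_const_mul, ofReal_integral_eq_lintegral_ofReal (hint.const_mul _)]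
    · refine setLIntegral_congr_fun measurableSet_Ioi fun u hu => ?_
      have hu0 : 0 < u := hu
      simp only [Pi.mul_apply]
      rw [← ENNReal.ofReal_mul (by positivity)]
      congr 1
      rw [show γ - β - 1 = γ + (-β - 1) by ring, Real.rpow_add hu0]
      ring
    · filter_upwards [ae_restrict_mem measurableSet_Ioi] with v hv
      have hv0 : 0 < v := hv
      have := hφ0 v
      positivity
  have h := rescaled_moment hβ0 hβ1 hsupp hlap hφ hφ0 hφB hγ hint
  rw [hlim] at h
  have h2 := (ENNReal.tendsto_toReal ENNReal.ofReal_ne_top).comp h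
  rw [ENNReal.toReal_ofReal] at h2
  · refine h2.congr' ?_
    filter_upwards [eventually_gt_atTop 0] with z hz
    simp only [Function.comp]
    rw [rescaled, lintegral_smul_measure, lintegral_map (by fun_prop) (by fun_prop),
      integral_eq_lintegral_of_nonneg_ae, smul_eq_mul, ENNReal.toReal_mul,
      ENNReal.toReal_ofReal (by positivity)]
    · have : ∫⁻ s, ENNReal.ofReal ((z⁻¹ * s) ^ γ * φ (z⁻¹ * s)) ∂μ
          = ENNReal.ofReal (z ^ (-γ)) * ∫⁻ s, ENNReal.ofReal (s ^ γ * φ (z⁻¹ * s)) ∂μ := by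
        rw [← lintegral_const_mul _ (by fun_prop)]
        refine lintegral_congr_ae ?_
        filter_upwards [ae_pos hsupp] with s hs
        rw [← ENNReal.ofReal_mul (by positivity), Real.mul_rpow (by positivity) hs.le,
          Real.inv_rpow hz.le, Real.rpow_neg hz.le, mul_assoc]
      rw [this, ENNReal.toReal_mul, ENNReal.toReal_ofReal (by positivity), ← mul_assoc,
        ← Real.rpow_add hz, sub_eq_add_neg]
    · filter_upwards [ae_pos hsupp] with s hs
      have := hφ0 (z⁻¹ * s)
      positivity
    · fun_prop
  · refine mul_nonneg (by positivity) (setIntegral_nonneg measurableSet_Ioi fun u hu => ?_)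
    have hv0 : 0 < u := hu
    have := hφ0 u
    positivity

/-- The regime `γ < β`, where `μ` has a finite moment of order `γ`. -/
lemma core_light (hβ0 : 0 < β) (hβ1 : β < 1) (hsupp : μ (Iic 0) = 0)
    (hlap : ∀ r : ℝ, 0 ≤ r → ∫ s, Real.exp (-(r * s)) ∂μ = Real.exp (-(r ^ β)))
    {φ : ℝ → ℝ} (hφ : Antitone φ) (hφ0 : ∀ u, 0 ≤ φ u) {B : ℝ} (hφB : ∀ u, φ u ≤ B)
    (hφlim : Tendsto φ (𝓝[>] 0) (𝓝 B)) {γ : ℝ} (hγ : 0 < γ) (hγβ : γ < β) :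
    Tendsto (fun z => ∫ s, s ^ γ * φ (z⁻¹ * s) ∂μ) atTop
      (𝓝 (B * (Real.Gamma (1 - γ / β) / Real.Gamma (1 - γ)))) := by
  have hφm := hφ.measurable
  obtain ⟨hi, hv⟩ := moment hβ0 hβ1 hsupp hlap hγ hγβ
  rw [← hv, mul_comm, ← integral_mul_const]
  refine tendsto_integral_filter_of_dominated_convergence (fun s => s ^ γ * B) ?_ ?_
    (hi.mul_const B) ?_
  · exact Eventually.of_forall fun z => by fun_prop
  · refine Eventually.of_forall fun z => ?_
    filter_upwards [ae_pos hsupp] with s hs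
    rw [Real.norm_of_nonneg (mul_nonneg (by positivity) (hφ0 _))]
    exact mul_le_mul_of_nonneg_left (hφB _) (by positivity)
  · filter_upwards [ae_pos hsupp] with s hs
    refine (hφlim.comp (tendsto_nhdsWithin_iff.2 ⟨?_, ?_⟩)).const_mul _
    · simpa using tendsto_inv_atTop_zero.mul_const s
    · filter_upwards [eventually_gt_atTop 0] with z hz
      exact mul_pos (inv_pos.2 hz) hs

end stable

/-! ### The critical logarithmic regime -/

section stable
variable {β : ℝ} {μ : Measure ℝ} [IsProbabilityMeasure μ]

/-- The integrand of the critical case in the logarithmic coordinate `θ = log v / log z`, where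
`X = log z`. -/
noncomputable def logDensity (β : ℝ) (μ : Measure ℝ) (φ : ℝ → ℝ) (X θ : ℝ) : ℝ≥0∞ :=
  ENNReal.ofReal (β * Real.exp (β * X * θ)) *
    ∫⁻ s in Ioi (Real.exp (X * θ)), ENNReal.ofReal (φ (Real.exp (-X) * s)) ∂μ

/-- The tail formula for the moment of order `β`, after substituting `v = e^{Xθ}`. -/
lemma log_substitution (hβ0 : 0 < β) (hsupp : μ (Iic 0) = 0) {φ : ℝ → ℝ} (hφm : Measurable φ)
    {X : ℝ} (hX : 0 < X) :
    ∫⁻ s, ENNReal.ofReal (s ^ β * φ (Real.exp (-X) * s)) ∂μ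
      = ENNReal.ofReal X * ∫⁻ θ, logDensity β μ φ X θ := by
  have himg : (fun θ : ℝ => Real.exp (X * θ)) '' univ = Ioi 0 := by
    ext v
    simp only [image_univ, mem_range, mem_Ioi]
    constructor
    · rintro ⟨θ, rfl⟩; positivity
    · intro hv
      exact ⟨Real.log v / X, by rw [mul_div_cancel₀ _ hX.ne', Real.exp_log hv]⟩
  rw [moment_eq_tails μ (ae_pos hsupp) hβ0 (φ := fun s => φ (Real.exp (-X) * s)) (by fun_prop),
    ← himg, lintegral_image_eq_lintegral_abs_deriv_mul (f' := fun θ => Real.exp (X * θ) * X)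
      MeasurableSet.univ, Measure.restrict_univ, ← lintegral_const_mul' _ _ ENNReal.ofReal_ne_top]
  · refine lintegral_congr fun θ => ?_
    rw [logDensity, ← mul_assoc, ← mul_assoc, ← ENNReal.ofReal_mul (by positivity),
      ← ENNReal.ofReal_mul (by positivity), abs_of_nonneg (by positivity), ← Real.exp_mul]
    congr 2
    rw [show β * X * θ = X * θ + X * θ * (β - 1) by ring, Real.exp_add]
    ring
  · intro θ _
    refine HasDerivAt.hasDerivWithinAt ?_
    simpa using ((hasDerivAt_id θ).const_mul X).exp
  · intro a _ b _ h
    exact mul_left_cancel₀ hX.ne' (Real.exp_injective h)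

omit [IsProbabilityMeasure μ] in
lemma logDensity_measurable (φ : ℝ → ℝ) {X : ℝ} (hX : 0 < X) :
    Measurable (logDensity β μ φ X) := by
  refine Measurable.mul (by fun_prop) (Antitone.measurable fun a b h => ?_)
  refine lintegral_mono_set (Ioi_subset_Ioi (Real.exp_le_exp.2 ?_))
  exact mul_le_mul_of_nonneg_left h hX.le

/-- `v^β μ(v, ∞)` at `v = e^{Xθ}`. -/
noncomputable def logTail (β : ℝ) (μ : Measure ℝ) (X θ : ℝ) : ℝ :=
  Real.exp (β * X * θ) * μ.real (Ioi (Real.exp (X * θ)))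

lemma logTail_le (hsupp : μ (Iic 0) = 0)
    (hlap : ∀ r : ℝ, 0 ≤ r → ∫ s, Real.exp (-(r * s)) ∂μ = Real.exp (-(r ^ β))) (X θ : ℝ) :
    logTail β μ X θ ≤ (1 - Real.exp (-1))⁻¹ := by
  have h := (measureReal_mono Ioi_subset_Ici_self).trans
    (tail_Ici_le (x := Real.exp (X * θ)) hsupp hlap (by positivity))
  calc _ ≤ Real.exp (β * X * θ) * ((1 - Real.exp (-1))⁻¹ * (Real.exp (X * θ)) ^ (-β)) := by
        unfold logTail; gcongr
    _ = _ := by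
      rw [← Real.exp_mul, mul_left_comm, ← Real.exp_add, show β * X * θ + X * θ * -β = 0 by ring,
        Real.exp_zero, mul_one]

lemma logTail_tendsto (hβ0 : 0 < β) (hβ1 : β < 1) (hsupp : μ (Iic 0) = 0)
    (hlap : ∀ r : ℝ, 0 ≤ r → ∫ s, Real.exp (-(r * s)) ∂μ = Real.exp (-(r ^ β)))
    {θ : ℝ} (hθ : 0 < θ) :
    Tendsto (fun X => logTail β μ X θ) atTop (𝓝 (1 / Real.Gamma (1 - β))) := by
  have h := (tail_tendsto hβ0 hβ1 hsupp hlap one_pos).1.comp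
    (Real.tendsto_exp_atTop.comp (tendsto_id.atTop_mul_const hθ))
  rw [Real.one_rpow] at h
  refine h.congr fun X => ?_
  simp only [Function.comp, id, one_mul, logTail, ← Real.exp_mul]
  congr 2
  ring

lemma logDensity_le (hβ0 : 0 < β) {φ : ℝ → ℝ} (hφ : Antitone φ) (hφ0 : ∀ u, 0 ≤ φ u) (X θ : ℝ) :
    logDensity β μ φ X θ
      ≤ ENNReal.ofReal (β * φ (Real.exp (X * (θ - 1))) * logTail β μ X θ) := by
  have h1 : ∫⁻ s in Ioi (Real.exp (X * θ)), ENNReal.ofReal (φ (Real.exp (-X) * s)) ∂μ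
      ≤ ENNReal.ofReal (φ (Real.exp (X * (θ - 1)))) * μ (Ioi (Real.exp (X * θ))) := by
    rw [← setLIntegral_const]
    refine setLIntegral_mono measurable_const fun s hs => ENNReal.ofReal_le_ofReal (hφ ?_)
    rw [show X * (θ - 1) = -X + X * θ by ring, Real.exp_add]
    exact mul_le_mul_of_nonneg_left (mem_Ioi.1 hs).le (by positivity)
  refine (mul_le_mul_right h1 _).trans (le_of_eq ?_)
  rw [← ofReal_measureReal, ← ENNReal.ofReal_mul (hφ0 _), ← ENNReal.ofReal_mul (by positivity),
    logTail]
  congr 1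
  ring

/-- Restricting the inner integral to `s ≤ e^{Xη}` keeps `φ` at least `φ(e^{X(η-1)})`. -/
lemma le_logDensity (hβ0 : 0 < β) {φ : ℝ → ℝ} (hφ : Antitone φ) (hφ0 : ∀ u, 0 ≤ φ u) {X : ℝ}
    (hX : 0 < X) {θ η : ℝ} (hη : θ ≤ η) :
    ENNReal.ofReal (β * φ (Real.exp (X * (η - 1))) *
        (logTail β μ X θ - Real.exp (-(β * X * (η - θ))) * logTail β μ X η))
      ≤ logDensity β μ φ X θ := by
  have hle : Real.exp (X * θ) ≤ Real.exp (X * η) :=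
    Real.exp_le_exp.2 (mul_le_mul_of_nonneg_left hη hX.le)
  have hsub : Ioi (Real.exp (X * η)) ⊆ Ioi (Real.exp (X * θ)) := Ioi_subset_Ioi hle
  have hIoc : μ.real (Ioc (Real.exp (X * θ)) (Real.exp (X * η)))
      = μ.real (Ioi (Real.exp (X * θ))) - μ.real (Ioi (Real.exp (X * η))) := by
    rw [← measureReal_sdiff hsub measurableSet_Ioi, Ioi_sdiff_Ioi]
  have h1 : ENNReal.ofReal (φ (Real.exp (X * (η - 1)))) *
        μ (Ioc (Real.exp (X * θ)) (Real.exp (X * η)))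
      ≤ ∫⁻ s in Ioi (Real.exp (X * θ)), ENNReal.ofReal (φ (Real.exp (-X) * s)) ∂μ := by
    refine le_trans ?_ (lintegral_mono_set (Ioc_subset_Ioi_self (a := Real.exp (X * η))))
    rw [← setLIntegral_const]
    have hm : Measurable fun s => ENNReal.ofReal (φ (Real.exp (-X) * s)) := by
      have := hφ.measurable
      fun_prop
    refine setLIntegral_mono hm fun s hs => ENNReal.ofReal_le_ofReal (hφ ?_)
    rw [show X * (η - 1) = -X + X * η by ring, Real.exp_add]
    exact mul_le_mul_of_nonneg_left hs.2 (by positivity)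
  refine le_trans (le_of_eq ?_) (mul_le_mul_right h1 _)
  rw [← ofReal_measureReal, ← ENNReal.ofReal_mul (hφ0 _), ← ENNReal.ofReal_mul (by positivity),
    hIoc, logTail, logTail, ← mul_assoc (Real.exp (-(β * X * (η - θ)))), ← Real.exp_add,
    show -(β * X * (η - θ)) + β * X * η = β * X * θ by ring]
  congr 1
  ring

/-- In the coordinate `θ` the mass of the critical integral spreads uniformly over `(0, 1)`. -/
lemma logDensity_tendsto (hβ0 : 0 < β) (hβ1 : β < 1) (hsupp : μ (Iic 0) = 0)
    (hlap : ∀ r : ℝ, 0 ≤ r → ∫ s, Real.exp (-(r * s)) ∂μ = Real.exp (-(r ^ β)))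
    {φ : ℝ → ℝ} (hφ : Antitone φ) (hφ0 : ∀ u, 0 ≤ φ u) {B : ℝ} (hφB : ∀ u, φ u ≤ B)
    (hφlim : Tendsto φ (𝓝[>] 0) (𝓝 B)) (hφtop : Tendsto φ atTop (𝓝 0))
    {θ : ℝ} (h0 : θ ≠ 0) (h1 : θ ≠ 1) :
    Tendsto (fun X => logDensity β μ φ X θ) atTop
      (𝓝 ((Ioo (0:ℝ) 1).indicator (fun _ => ENNReal.ofReal (β * B * (1 / Real.Gamma (1 - β)))) θ)) := by
  have hB : 0 ≤ B := (hφ0 0).trans (hφB 0)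
  have hexp : ∀ c : ℝ, c < 0 → Tendsto (fun X : ℝ => Real.exp (X * c)) atTop (𝓝[>] 0) := by
    intro c hc
    refine tendsto_nhdsWithin_iff.2 ⟨Real.tendsto_exp_atBot.comp
      (tendsto_id.atTop_mul_const_of_neg hc), Eventually.of_forall fun X => Real.exp_pos _⟩
  rcases lt_or_gt_of_ne h0 with hneg | hpos
  · rw [indicator_of_notMem (fun h => absurd h.1 (not_lt.2 hneg.le))]
    have hlim : Tendsto (fun X : ℝ => ENNReal.ofReal (β * B * Real.exp (X * (β * θ)))) atTop (𝓝 0) := by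
      have := ((hexp (β * θ) (mul_neg_of_pos_of_neg hβ0 hneg)).mono_right
        nhdsWithin_le_nhds).const_mul (β * B)
      rw [mul_zero] at this
      simpa using ENNReal.tendsto_ofReal this
    refine tendsto_of_tendsto_of_tendsto_of_le_of_le tendsto_const_nhds hlim
      (fun _ => zero_le) fun X => ?_
    refine (logDensity_le hβ0 hφ hφ0 X θ).trans (ENNReal.ofReal_le_ofReal ?_)
    have hm : logTail β μ X θ ≤ Real.exp (X * (β * θ)) := by
      rw [logTail, show β * X * θ = X * (β * θ) by ring]
      exact mul_le_of_le_one_right (by positivity) measureReal_le_one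
    have hm0 : 0 ≤ logTail β μ X θ := by unfold logTail; positivity
    have := hφB (Real.exp (X * (θ - 1)))
    gcongr
  rcases lt_or_gt_of_ne h1 with hlt | hgt
  · rw [indicator_of_mem (mem_Ioo.2 ⟨hpos, hlt⟩)]
    -- For `θ < η < 1`, the points `s` in `(e^{Xθ}, e^{Xη})` carry asymptotically all the tail mass
    -- beyond `e^{Xθ}`, and there `s / z → 0`.
    obtain ⟨η, hη, hη1⟩ := exists_between hlt
    have ha := logTail_tendsto hβ0 hβ1 hsupp hlap hpos
    have hb := logTail_tendsto hβ0 hβ1 hsupp hlap (hpos.trans hη)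
    have hup := ENNReal.tendsto_ofReal (ha.const_mul (β * B))
    have hc : Tendsto (fun X => β * φ (Real.exp (X * (η - 1))) *
        (logTail β μ X θ - Real.exp (X * (β * (θ - η))) * logTail β μ X η)) atTop
        (𝓝 (β * B * (1 / Real.Gamma (1 - β) - 0 * (1 / Real.Gamma (1 - β))))) := by
      refine ((hφlim.comp (hexp (η - 1) (by linarith))).const_mul β).mul (ha.sub (Tendsto.mul ?_ hb))
      exact (hexp _ (mul_neg_of_pos_of_neg hβ0 (by linarith))).mono_right nhdsWithin_le_nhds
    rw [zero_mul, sub_zero] at hc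
    refine tendsto_of_tendsto_of_tendsto_of_le_of_le' (ENNReal.tendsto_ofReal hc) hup ?_ ?_
    · filter_upwards [eventually_gt_atTop 0] with X hX
      refine le_trans (le_of_eq ?_) (le_logDensity hβ0 hφ hφ0 hX hη.le)
      rw [show -(β * X * (η - θ)) = X * (β * (θ - η)) by ring]
    · refine Eventually.of_forall fun X => ?_
      refine (logDensity_le hβ0 hφ hφ0 X θ).trans (ENNReal.ofReal_le_ofReal ?_)
      have hm0 : 0 ≤ logTail β μ X θ := by unfold logTail; positivity
      have := hφB (Real.exp (X * (θ - 1)))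
      gcongr
  · rw [indicator_of_notMem (fun h => absurd h.2 (not_lt.2 hgt.le))]
    have hlim : Tendsto (fun X : ℝ => ENNReal.ofReal
        (β * φ (Real.exp (X * (θ - 1))) * (1 - Real.exp (-1))⁻¹)) atTop (𝓝 0) := by
      have := (((hφtop.comp (Real.tendsto_exp_atTop.comp
        (tendsto_id.atTop_mul_const (sub_pos.2 hgt)))).const_mul β).mul_const (1 - Real.exp (-1))⁻¹)
      rw [mul_zero, zero_mul] at this
      simpa using ENNReal.tendsto_ofReal this
    refine tendsto_of_tendsto_of_tendsto_of_le_of_le tendsto_const_nhds hlim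
      (fun _ => zero_le) fun X => ?_
    refine (logDensity_le hβ0 hφ hφ0 X θ).trans (ENNReal.ofReal_le_ofReal ?_)
    have := hφ0 (Real.exp (X * (θ - 1)))
    have := logTail_le hsupp hlap X θ
    gcongr

lemma tendsto_zero_of_integrable_inv_mul {φ : ℝ → ℝ} (hφ : Antitone φ) (hφ0 : ∀ u, 0 ≤ φ u)
    (hint : IntegrableOn (fun u : ℝ => u⁻¹ * φ u) (Ioi 1)) : Tendsto φ atTop (𝓝 0) := by
  have hbdd : BddBelow (range φ) := ⟨0, by rintro _ ⟨u, rfl⟩; exact hφ0 u⟩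
  have h := tendsto_atTop_ciInf hφ hbdd
  set L := ⨅ u, φ u
  have hL0 : 0 ≤ L := le_ciInf hφ0
  rcases hL0.eq_or_lt with hL | hL
  · rwa [← hL] at h
  exfalso
  refine not_integrableOn_Ioi_inv (a := 1) ?_
  have hdom : IntegrableOn (fun u : ℝ => L * u⁻¹) (Ioi 1) := by
    refine Integrable.mono' hint (by fun_prop) ?_
    filter_upwards [ae_restrict_mem measurableSet_Ioi] with u hu
    have hu0 : 0 < u := one_pos.trans hu
    rw [Real.norm_of_nonneg (by positivity), mul_comm]
    exact mul_le_mul_of_nonneg_left (ciInf_le hbdd u) (by positivity)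
  refine (hdom.const_mul L⁻¹).congr (Eventually.of_forall fun u => ?_)
  simp only
  field_simp

/-- The critical regime `γ = β`. -/
lemma core_log (hβ0 : 0 < β) (hβ1 : β < 1) (hsupp : μ (Iic 0) = 0)
    (hlap : ∀ r : ℝ, 0 ≤ r → ∫ s, Real.exp (-(r * s)) ∂μ = Real.exp (-(r ^ β)))
    {φ : ℝ → ℝ} (hφ : Antitone φ) (hφ0 : ∀ u, 0 ≤ φ u) {B : ℝ} (hφB : ∀ u, φ u ≤ B)
    (hφlim : Tendsto φ (𝓝[>] 0) (𝓝 B))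
    (hint : IntegrableOn (fun u : ℝ => u⁻¹ * φ u) (Ioi 1)) :
    Tendsto (fun z => (∫ s, s ^ β * φ (z⁻¹ * s) ∂μ) / Real.log z) atTop
      (𝓝 (B * (β / Real.Gamma (1 - β)))) := by
  have hφm := hφ.measurable
  have hB : 0 ≤ B := (hφ0 0).trans (hφB 0)
  have hΓ : 0 < Real.Gamma (1 - β) := Real.Gamma_pos_of_pos (by linarith)
  have hφtop := tendsto_zero_of_integrable_inv_mul hφ hφ0 hint
  set K := (1 - Real.exp (-1))⁻¹ with hKdef
  have hK : 0 ≤ K := by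
    have : Real.exp (-1) < 1 := by rw [Real.exp_lt_one_iff]; norm_num
    exact inv_nonneg.2 (by linarith)
  have hmain : Tendsto (fun X => ∫⁻ θ, logDensity β μ φ X θ) atTop
      (𝓝 (ENNReal.ofReal (β * B * (1 / Real.Gamma (1 - β))))) := by
    have hval : ∫⁻ θ, (Ioo (0:ℝ) 1).indicator
        (fun _ => ENNReal.ofReal (β * B * (1 / Real.Gamma (1 - β)))) θ
        = ENNReal.ofReal (β * B * (1 / Real.Gamma (1 - β))) := by
      rw [lintegral_indicator_const measurableSet_Ioo, Real.volume_Ioo]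
      simp
    rw [← hval]
    -- The three pieces use `μ ≤ 1` for `θ ≤ 0`, the tail bound with `φ ≤ B` for `0 < θ ≤ 1`, and the
    -- tail bound with the decay of `φ` for `θ > 1`.
    refine tendsto_lintegral_filter_of_dominated_convergence
      (fun θ => (Iic (0:ℝ)).indicator (fun θ => ENNReal.ofReal (β * B * Real.exp (β * θ))) θ
        + ((Ioc (0:ℝ) 1).indicator (fun _ => ENNReal.ofReal (β * B * K)) θ
          + (Ioi (1:ℝ)).indicator
            (fun θ => ENNReal.ofReal (β * K * φ (Real.exp (θ - 1)))) θ)) ?_ ?_ ?_ ?_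
    · filter_upwards [eventually_gt_atTop 0] with X hX using logDensity_measurable φ hX
    · filter_upwards [eventually_ge_atTop 1] with X hX
      refine Eventually.of_forall fun θ => ?_
      refine (logDensity_le hβ0 hφ hφ0 X θ).trans ?_
      have hm0 : 0 ≤ logTail β μ X θ := by unfold logTail; positivity
      have hmK := logTail_le hsupp hlap X θ
      rw [← hKdef] at hmK
      have hb := hφB (Real.exp (X * (θ - 1)))
      have hb0 := hφ0 (Real.exp (X * (θ - 1)))
      rcases le_or_gt θ 0 with h0 | h0
      · refine le_trans ?_ le_self_add
        rw [indicator_of_mem (mem_Iic.2 h0)]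
        refine ENNReal.ofReal_le_ofReal ?_
        have hm : logTail β μ X θ ≤ Real.exp (β * θ) := by
          refine (mul_le_of_le_one_right (by positivity) measureReal_le_one).trans ?_
          rw [Real.exp_le_exp, mul_assoc]
          exact mul_le_mul_of_nonneg_left (by nlinarith) hβ0.le
        gcongr
      · refine le_trans ?_ le_add_self
        rcases le_or_gt θ 1 with h1 | h1
        · refine le_trans ?_ le_self_add
          rw [indicator_of_mem (mem_Ioc.2 ⟨h0, h1⟩)]
          refine ENNReal.ofReal_le_ofReal ?_
          gcongr
        · refine le_trans ?_ le_add_self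
          rw [indicator_of_mem (mem_Ioi.2 h1)]
          refine ENNReal.ofReal_le_ofReal ?_
          have hc : φ (Real.exp (X * (θ - 1))) ≤ φ (Real.exp (θ - 1)) := by
            refine hφ (Real.exp_le_exp.2 ?_)
            nlinarith
          rw [mul_right_comm]
          gcongr
    · have i1 : IntegrableOn (fun θ : ℝ => β * B * Real.exp (β * θ)) (Iic 0) :=
        (integrableOn_exp_mul_Iic hβ0 0).const_mul _
      have i2 : IntegrableOn (fun θ : ℝ => β * K * φ (Real.exp (θ - 1))) (Ioi 1) := by
        refine Integrable.const_mul ?_ _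
        have h1 : IntegrableOn (fun x : ℝ => φ (Real.exp x)) (Ioi 0) := by
          have := (integrableOn_comp_exp_Ioi (fun u => u⁻¹ * φ u) 0).2 (by simpa using hint)
          refine this.congr (Eventually.of_forall fun x => ?_)
          simp
        have h2 := ((measurePreserving_sub_right volume (1:ℝ)).integrableOn_comp_preimage
          (MeasurableEquiv.subRight (1:ℝ)).measurableEmbedding).2 h1
        have h3 : (fun x : ℝ => x - 1) ⁻¹' Ioi 0 = Ioi 1 := by ext; simp
        rwa [h3] at h2
      rw [lintegral_add_left (Measurable.indicator (by fun_prop) measurableSet_Iic),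
        lintegral_add_left (Measurable.indicator (by fun_prop) measurableSet_Ioc),
        lintegral_indicator measurableSet_Iic, lintegral_indicator_const measurableSet_Ioc,
        lintegral_indicator measurableSet_Ioi]
      refine ENNReal.add_ne_top.2 ⟨?_, ENNReal.add_ne_top.2 ⟨?_, ?_⟩⟩
      · exact (lintegral_ofReal_ne_top_iff_integrable (by fun_prop)
          (Eventually.of_forall fun θ => by simp only [Pi.zero_apply]; positivity)).2 i1
      · exact ENNReal.mul_ne_top ENNReal.ofReal_ne_top (by simp)
      · exact (lintegral_ofReal_ne_top_iff_integrable i2.aestronglyMeasurable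
          (Eventually.of_forall fun θ => by
            have := hφ0 (Real.exp (θ - 1)); simp only [Pi.zero_apply]; positivity)).2 i2
    · have hne : ∀ c : ℝ, ∀ᵐ θ : ℝ, θ ≠ c := fun c => by simp [ae_iff]
      filter_upwards [hne 0, hne 1] with θ h0 h1
      exact logDensity_tendsto hβ0 hβ1 hsupp hlap hφ hφ0 hφB hφlim hφtop h0 h1
  have h2 := ((ENNReal.tendsto_toReal ENNReal.ofReal_ne_top).comp hmain).comp Real.tendsto_log_atTop
  rw [ENNReal.toReal_ofReal (by positivity)] at h2
  rw [show B * (β / Real.Gamma (1 - β)) = β * B * (1 / Real.Gamma (1 - β)) by ring]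
  refine h2.congr' ?_
  filter_upwards [eventually_gt_atTop 1] with z hz
  have hX := Real.log_pos hz
  simp only [Function.comp]
  rw [integral_eq_lintegral_of_nonneg_ae]
  · have := log_substitution (μ := μ) hβ0 hsupp hφm hX
    rw [Real.exp_neg, Real.exp_log (by linarith)] at this
    rw [this, ENNReal.toReal_mul, ENNReal.toReal_ofReal hX.le, mul_div_cancel_left₀ _ hX.ne']
  · filter_upwards [ae_pos hsupp] with s hs
    have := hφ0 (z⁻¹ * s)
    positivity
  · fun_prop

end stable

/-! ### Reduction of the kernel to one variable -/

section profile

/-- The profile `u ↦ F (C₂ u^κ)` on `(0, ∞)`, extended by its limit `F0` at `0+` to a globally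
antitone function. -/
noncomputable def profile (F : ℝ → ℝ) (F0 C₂ κ u : ℝ) : ℝ :=
  if 0 < u then F (C₂ * u ^ κ) else F0

variable {F : ℝ → ℝ} {F0 C₂ κ : ℝ}

lemma le_F0 (hFanti : ∀ r s : ℝ, 0 ≤ r → r ≤ s → F s ≤ F r) (hF0 : Tendsto F (𝓝[>] 0) (𝓝 F0))
    {r : ℝ} (hr : 0 < r) : F r ≤ F0 := by
  refine ge_of_tendsto hF0 ?_
  filter_upwards [Ioo_mem_nhdsGT hr] with s hs using hFanti s r hs.1.le hs.2.le

lemma profile_antitone (hC₂ : 0 < C₂) (hκ : 0 < κ)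
    (hFanti : ∀ r s : ℝ, 0 ≤ r → r ≤ s → F s ≤ F r) (hF0 : Tendsto F (𝓝[>] 0) (𝓝 F0)) :
    Antitone (profile F F0 C₂ κ) := by
  intro a b hab
  unfold profile
  by_cases ha : 0 < a
  · rw [if_pos ha, if_pos (ha.trans_le hab)]
    exact hFanti _ _ (by positivity) (by gcongr)
  · rw [if_neg ha]
    split_ifs with hb
    · exact le_F0 hFanti hF0 (by positivity)
    · exact le_rfl

lemma profile_le (hC₂ : 0 < C₂)
    (hFanti : ∀ r s : ℝ, 0 ≤ r → r ≤ s → F s ≤ F r) (hF0 : Tendsto F (𝓝[>] 0) (𝓝 F0)) (u : ℝ) :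
    profile F F0 C₂ κ u ≤ F0 := by
  unfold profile
  split_ifs with hu
  · exact le_F0 hFanti hF0 (by positivity)
  · exact le_rfl

lemma profile_nonneg (hC₂ : 0 < C₂) (hFpos : ∀ r : ℝ, 0 ≤ r → 0 < F r) (hF0 : 0 < F0) (u : ℝ) :
    0 ≤ profile F F0 C₂ κ u := by
  unfold profile
  split_ifs with hu
  · exact (hFpos _ (by positivity)).le
  · exact hF0.le

lemma profile_tendsto (hC₂ : 0 < C₂) (hκ : 0 < κ) (hF0 : Tendsto F (𝓝[>] 0) (𝓝 F0)) :
    Tendsto (profile F F0 C₂ κ) (𝓝[>] 0) (𝓝 F0) := by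
  have h : Tendsto (fun u : ℝ => C₂ * u ^ κ) (𝓝[>] 0) (𝓝[>] 0) := by
    refine tendsto_nhdsWithin_iff.2 ⟨?_, ?_⟩
    · have hc : Continuous fun u : ℝ => C₂ * u ^ κ :=
        continuous_const.mul (Real.continuous_rpow_const hκ.le)
      have := hc.tendsto 0
      rw [Real.zero_rpow hκ.ne', mul_zero] at this
      exact this.mono_left nhdsWithin_le_nhds
    · filter_upwards [self_mem_nhdsWithin] with u hu
      have : 0 < u := hu
      exact mem_Ioi.2 (by positivity)
  refine (hF0.comp h).congr' ?_
  filter_upwards [self_mem_nhdsWithin] with u hu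
  exact (if_pos hu).symm

lemma subst_identity (G : ℝ → ℝ) (hC₂ : 0 < C₂) {e u : ℝ} (hu : 0 < u) :
    u ^ (κ - 1) * ((C₂ * u ^ κ) ^ e * G (C₂ * u ^ κ))
      = C₂ ^ e * (u ^ (κ * (e + 1) - 1) * G (C₂ * u ^ κ)) := by
  rw [Real.mul_rpow hC₂.le (by positivity), ← Real.rpow_mul hu.le,
    show κ * (e + 1) - 1 = (κ - 1) + κ * e by ring, Real.rpow_add hu]
  ring

/-- Integrability is preserved by the substitution `v = C₂ u^κ`. -/
lemma subst_integrable (G : ℝ → ℝ) (hC₂ : 0 < C₂) (hκ : 0 < κ) {e : ℝ}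
    (h : IntegrableOn (fun v : ℝ => v ^ e * G v) (Ioi 0)) :
    IntegrableOn (fun u : ℝ => u ^ (κ * (e + 1) - 1) * G (C₂ * u ^ κ)) (Ioi 0) := by
  rw [← mul_zero C₂] at h
  have h1 := (integrableOn_Ioi_comp_mul_left_iff _ _ hC₂).2 h
  have h2 := (integrableOn_Ioi_comp_rpow_iff _ hκ.ne').2 h1
  refine IntegrableOn.congr_fun (h2.const_mul (κ⁻¹ * (C₂ ^ e)⁻¹)) (fun u hu => ?_)
    measurableSet_Ioi
  have := Real.rpow_pos_of_pos hC₂ e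
  simp only [smul_eq_mul]
  rw [abs_of_pos hκ, mul_assoc κ, subst_identity G hC₂ hu]
  field_simp

lemma subst_integral (G : ℝ → ℝ) (hC₂ : 0 < C₂) (hκ : 0 < κ) (e : ℝ) :
    ∫ u in Ioi (0:ℝ), u ^ (κ * (e + 1) - 1) * G (C₂ * u ^ κ)
      = κ⁻¹ * C₂ ^ (-(e + 1)) * ∫ v in Ioi (0:ℝ), v ^ e * G v := by
  have h1 := integral_comp_mul_left_Ioi (fun v : ℝ => v ^ e * G v) 0 hC₂
  rw [mul_zero, ← integral_comp_rpow_Ioi_of_pos hκ] at h1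
  have h2 : ∫ u in Ioi (0:ℝ), (κ * u ^ (κ - 1)) • ((C₂ * u ^ κ) ^ e * G (C₂ * u ^ κ))
      = ∫ u in Ioi (0:ℝ), (κ * C₂ ^ e) * (u ^ (κ * (e + 1) - 1) * G (C₂ * u ^ κ)) := by
    refine setIntegral_congr_fun measurableSet_Ioi fun u hu => ?_
    simp only [smul_eq_mul]
    rw [mul_assoc κ, subst_identity G hC₂ hu, mul_assoc]
  rw [h2, integral_const_mul, smul_eq_mul] at h1
  have := Real.rpow_pos_of_pos hC₂ e
  rw [Real.rpow_neg hC₂.le, Real.rpow_add hC₂, Real.rpow_one]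
  generalize (∫ u in Ioi (0:ℝ), u ^ (κ * (e + 1) - 1) * G (C₂ * u ^ κ)) = J at h1 ⊢
  generalize (∫ v in Ioi (0:ℝ), v ^ e * G v) = J' at h1 ⊢
  field_simp at h1 ⊢
  linarith

/-- Monotonicity bounds `F` near the origin, so integrability at infinity suffices. -/
lemma integrable_Ioi_of_one (hFpos : ∀ r : ℝ, 0 ≤ r → 0 < F r)
    (hFanti : ∀ r s : ℝ, 0 ≤ r → r ≤ s → F s ≤ F r) {e a : ℝ} (ha : 0 ≤ a)
    (hpow : IntegrableOn (fun v : ℝ => v ^ e) (Ioc a 1))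
    (hFint : IntegrableOn (fun s : ℝ => s ^ e * F s) (Ioi (1:ℝ))) :
    IntegrableOn (fun s : ℝ => s ^ e * F s) (Ioi a) := by
  have h1 : IntegrableOn (fun s : ℝ => s ^ e * F s) (Ioc a 1) := by
    have hm : AEMeasurable F (volume.restrict (Ioc a 1)) :=
      aemeasurable_restrict_of_antitoneOn measurableSet_Ioc
        fun x hx y _ hxy => hFanti x y (ha.trans hx.1.le) hxy
    refine Integrable.mono' (hpow.mul_const (F 0)) ?_ ?_
    · exact (AEMeasurable.mul (by fun_prop) hm).aestronglyMeasurable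
    · filter_upwards [ae_restrict_mem measurableSet_Ioc] with s hs
      have hs0 : 0 < s := ha.trans_lt hs.1
      have := hFpos s hs0.le
      rw [Real.norm_of_nonneg (by positivity)]
      exact mul_le_mul_of_nonneg_left (hFanti 0 s le_rfl hs0.le) (by positivity)
  refine (h1.union hFint).mono_set fun x hx => ?_
  rcases le_or_gt x 1 with h | h
  · exact Or.inl ⟨hx, h⟩
  · exact Or.inr h

lemma profile_integrable_heavy (hFpos : ∀ r : ℝ, 0 ≤ r → 0 < F r)
    (hFanti : ∀ r s : ℝ, 0 ≤ r → r ≤ s → F s ≤ F r) (hC₂ : 0 < C₂) (hκ : 0 < κ) {e : ℝ}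
    (he : -1 < e) (hFint : IntegrableOn (fun s : ℝ => s ^ e * F s) (Ioi (1:ℝ))) :
    IntegrableOn (fun s : ℝ => s ^ e * F s) (Ioi 0) ∧
    IntegrableOn (fun u : ℝ => u ^ (κ * (e + 1) - 1) * profile F F0 C₂ κ u) (Ioi 0) := by
  have h0 : IntegrableOn (fun s : ℝ => s ^ e * F s) (Ioi 0) := by
    refine integrable_Ioi_of_one hFpos hFanti le_rfl ?_ hFint
    have := intervalIntegral.intervalIntegrable_rpow' (a := 0) (b := 1) he
    rwa [intervalIntegrable_iff_integrableOn_Ioc_of_le zero_le_one] at this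
  refine ⟨h0, IntegrableOn.congr_fun (subst_integrable F hC₂ hκ h0) (fun u hu => ?_)
    measurableSet_Ioi⟩
  simp only [profile]
  rw [if_pos (mem_Ioi.1 hu)]

lemma profile_integral (hC₂ : 0 < C₂) (hκ : 0 < κ) (e : ℝ) :
    ∫ u in Ioi (0:ℝ), u ^ (κ * (e + 1) - 1) * profile F F0 C₂ κ u
      = κ⁻¹ * C₂ ^ (-(e + 1)) * ∫ v in Ioi (0:ℝ), v ^ e * F v := by
  rw [← subst_integral F hC₂ hκ e]
  refine setIntegral_congr_fun measurableSet_Ioi fun u hu => ?_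
  simp only [profile]
  rw [if_pos (mem_Ioi.1 hu)]

lemma profile_integrable_log (hFpos : ∀ r : ℝ, 0 ≤ r → 0 < F r)
    (hFanti : ∀ r s : ℝ, 0 ≤ r → r ≤ s → F s ≤ F r) (hC₂ : 0 < C₂) (hκ : 0 < κ)
    (hFint : IntegrableOn (fun s : ℝ => s ^ (-1:ℝ) * F s) (Ioi (1:ℝ))) :
    IntegrableOn (fun u : ℝ => u⁻¹ * profile F F0 C₂ κ u) (Ioi 1) := by
  have h0 : IntegrableOn (fun s : ℝ => s ^ (-1:ℝ) * F s) (Ioi C₂) := by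
    refine integrable_Ioi_of_one hFpos hFanti hC₂.le ?_ hFint
    refine (ContinuousOn.integrableOn_Icc (a := C₂) (b := 1) ?_).mono_set Ioc_subset_Icc_self
    exact fun x hx => (Real.continuousAt_rpow_const x _
      (Or.inl (hC₂.trans_le hx.1).ne')).continuousWithinAt
  -- Truncating `F` below `C₂` removes the singularity at the origin.
  have h1 : IntegrableOn (fun s : ℝ => s ^ (-1:ℝ) * (Ioi C₂).indicator F s) (Ioi 0) := by
    have : (fun s : ℝ => s ^ (-1:ℝ) * (Ioi C₂).indicator F s)
        = (Ioi C₂).indicator (fun s : ℝ => s ^ (-1:ℝ) * F s) := by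
      ext s; by_cases hs : s ∈ Ioi C₂ <;> simp [hs]
    rw [this]
    exact (h0.integrable_indicator measurableSet_Ioi).integrableOn
  have h2 := (subst_integrable _ hC₂ hκ h1).mono_set (Ioi_subset_Ioi zero_le_one)
  refine IntegrableOn.congr_fun h2 (fun u hu => ?_) measurableSet_Ioi
  have hu1 : 1 < u := hu
  have hu0 : 0 < u := one_pos.trans hu1
  have hmem : C₂ * u ^ κ ∈ Ioi C₂ := by
    have := Real.one_lt_rpow hu1 hκ
    exact mem_Ioi.2 (by nlinarith)
  simp only [profile]
  rw [if_pos hu0, indicator_of_mem hmem, show κ * (-1 + 1) - 1 = -1 by ring, Real.rpow_neg_one]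

end profile

/-- The scaling form of the heat kernel reduces the subordinated kernel to a function of the single
variable `z = ρ^{-α/β} t`. -/
lemma kernel_integral {β : ℝ} {μ : Measure ℝ} (hβ0 : 0 < β) (hsupp : μ (Iic 0) = 0)
    {d α C₁ C₂ : ℝ} (hα : 0 < α) (F : ℝ → ℝ) (F0 : ℝ) {ρ t : ℝ} (hρ : 0 < ρ) (ht : 0 < t) :
    ∫ s in Ioi (0:ℝ), C₁ * (t ^ β * s ^ (-β)) ^ (-(d/α)) *
          F (C₂ * ρ * (t ^ β * s ^ (-β)) ^ (-(1/α))) ∂μ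
      = C₁ * t ^ (-(β * d / α)) *
        ∫ s, s ^ (β * d / α) * profile F F0 C₂ (β / α) ((ρ ^ (-(α/β)) * t)⁻¹ * s) ∂μ := by
  rw [Measure.restrict_eq_self_of_ae_mem (s := Ioi 0) (ae_pos hsupp), ← integral_const_mul]
  refine integral_congr_ae ?_
  filter_upwards [ae_pos hsupp] with s hs
  have hz : 0 < (ρ ^ (-(α/β)) * t)⁻¹ * s := by positivity
  have hpow : ∀ c : ℝ, (t ^ β * s ^ (-β)) ^ (-c) = t ^ (-(β * c)) * s ^ (β * c) := by
    intro c
    rw [Real.mul_rpow (by positivity) (by positivity), ← Real.rpow_mul ht.le,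
      ← Real.rpow_mul hs.le]
    congr 2 <;> ring
  have harg : ((ρ ^ (-(α/β)) * t)⁻¹ * s) ^ (β / α) = ρ * (t ^ β * s ^ (-β)) ^ (-(1/α)) := by
    rw [hpow, Real.mul_rpow (by positivity) hs.le, Real.inv_rpow (by positivity),
      Real.mul_rpow (by positivity) ht.le, ← Real.rpow_mul hρ.le,
      show -(α / β) * (β / α) = -1 by field_simp, Real.rpow_neg_one, mul_inv, inv_inv,
      ← Real.rpow_neg ht.le, show β * (1 / α) = β / α by ring, mul_assoc]
  simp only [profile]
  rw [if_pos hz, harg, hpow (d / α), mul_div_assoc, mul_assoc C₂]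
  ring

lemma ratio_close {I : ℝ → ℝ} {L : ℝ} (h : Tendsto I atTop (𝓝 L)) (hL : 0 < L) {ε : ℝ}
    (hε : 0 < ε) : ∃ R : ℝ, 1 < R ∧ ∀ z, R ≤ z → |I z / L - 1| ≤ ε := by
  have h1 : Tendsto (fun z => I z / L) atTop (𝓝 1) := by
    simpa [hL.ne'] using h.div_const L
  obtain ⟨R, hR⟩ := eventually_atTop.1
    (h1.eventually (Metric.closedBall_mem_nhds 1 hε))
  refine ⟨max R 2, by simp, fun z hz => ?_⟩
  simpa [Real.dist_eq] using hR z ((le_max_left _ _).trans hz)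

end

theorem stmt_2
    (β : ℝ) (hβ0 : 0 < β) (hβ1 : β < 1)
    (μ : Measure ℝ) (hprob : IsProbabilityMeasure μ)
    (hsupp : μ (Set.Iic 0) = 0)
    (hlap : ∀ r : ℝ, 0 < r →
      ∫ s in Set.Ioi (0:ℝ), Real.exp (-(r * s)) ∂μ = Real.exp (-(r ^ β)))
    {M : Type*} [MetricSpace M]
    (d α C₁ C₂ : ℝ) (hd : 0 < d) (hα : 0 < α) (hC₁ : 0 < C₁) (hC₂ : 0 < C₂)
    (F : ℝ → ℝ) (hFpos : ∀ r : ℝ, 0 ≤ r → 0 < F r)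
    (hFanti : ∀ r s : ℝ, 0 ≤ r → r ≤ s → F s ≤ F r)
    (F0 : ℝ) (hF0 : Filter.Tendsto F (nhdsWithin 0 (Set.Ioi 0)) (nhds F0))
    (hFint : IntegrableOn (fun s : ℝ => s ^ (d - α - 1) * F s) (Set.Ioi (1:ℝ)))
    (pSinv : ℝ → M → M → ℝ)
    (hpSinv : ∀ t : ℝ, 0 < t → ∀ x y : M,
      pSinv t x y = ∫ s in Set.Ioi (0:ℝ),
        C₁ * (t ^ β * s ^ (-β)) ^ (-(d/α)) *
          F (C₂ * dist x y * (t ^ β * s ^ (-β)) ^ (-(1/α))) ∂μ) :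
    (d < α →
      ∀ ε : ℝ, 0 < ε → ∃ R : ℝ, 0 < R ∧ ∀ t : ℝ, 0 < t → ∀ x y : M, x ≠ y →
        R ≤ dist x y ^ (-(α/β)) * t →
        |pSinv t x y /
          (C₁ * F0 * (Real.Gamma (1 - d/α) / Real.Gamma (1 - β * d/α)) *
            t ^ (-(β * d/α))) - 1| ≤ ε) ∧
    (d = α →
      ∀ ε : ℝ, 0 < ε → ∃ R : ℝ, 0 < R ∧ ∀ t : ℝ, 0 < t → ∀ x y : M, x ≠ y →
        R ≤ dist x y ^ (-(α/β)) * t →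
        |pSinv t x y /
          (C₁ * (β / Real.Gamma (1 - β)) * F0 * t ^ (-β) *
            Real.log (dist x y ^ (-(α/β)) * t)) - 1| ≤ ε) ∧
    (α < d →
      ∀ ε : ℝ, 0 < ε → ∃ R : ℝ, 0 < R ∧ ∀ t : ℝ, 0 < t → ∀ x y : M, x ≠ y →
        R ≤ dist x y ^ (-(α/β)) * t →
        |pSinv t x y /
          (C₁ * (C₂ ^ (α - d) * α / Real.Gamma (1 - β)) *
            (∫ s in Set.Ioi (0:ℝ), s ^ (d - α - 1) * F s) *
            (dist x y ^ (α - d) * t ^ (-β))) - 1| ≤ ε) := by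
  have hF0pos : 0 < F0 := (hFpos 1 zero_le_one).trans_le (le_F0 hFanti hF0 one_pos)
  have hlap' : ∀ r : ℝ, 0 ≤ r → ∫ s, Real.exp (-(r * s)) ∂μ = Real.exp (-(r ^ β)) :=
    fun r hr => laplace_full hβ0 hsupp hlap hr
  have hκ : 0 < β / α := by positivity
  have hφ := profile_antitone (κ := β / α) hC₂ hκ hFanti hF0
  have hφ0 := profile_nonneg (κ := β / α) hC₂ hFpos hF0pos
  have hφB := profile_le (κ := β / α) hC₂ hFanti hF0
  have hφlim := profile_tendsto hC₂ hκ hF0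
  have hγ : 0 < β * d / α := by positivity
  have hΓ : 0 < Real.Gamma (1 - β) := Real.Gamma_pos_of_pos (by linarith)
  have hker : ∀ t : ℝ, 0 < t → ∀ x y : M, x ≠ y → pSinv t x y
      = C₁ * t ^ (-(β * d / α)) * ∫ s, s ^ (β * d / α) *
          profile F F0 C₂ (β / α) ((dist x y ^ (-(α/β)) * t)⁻¹ * s) ∂μ := fun t ht x y hxy => by
    rw [hpSinv t ht x y, kernel_integral hβ0 hsupp hα F F0 (dist_pos.2 hxy) ht]
  refine ⟨fun hdα ε hε => ?_, fun hdα ε hε => ?_, fun hdα ε hε => ?_⟩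
  · have hda : d / α < 1 := (div_lt_one hα).2 hdα
    have hγβ : β * d / α < β := by
      rw [mul_div_assoc]; exact mul_lt_of_lt_one_right hβ0 hda
    have hlim := core_light hβ0 hβ1 hsupp hlap' hφ hφ0 hφB hφlim hγ hγβ
    rw [show β * d / α / β = d / α by field_simp] at hlim
    have hG1 : 0 < Real.Gamma (1 - d / α) := Real.Gamma_pos_of_pos (by linarith)
    have hG2 : 0 < Real.Gamma (1 - β * d / α) := Real.Gamma_pos_of_pos (by linarith)
    obtain ⟨R, hR, h⟩ := ratio_close hlim (by positivity) hε
    refine ⟨R, by linarith, fun t ht x y hxy hz => ?_⟩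
    convert h _ hz using 3
    rw [hker t ht x y hxy]
    have := Real.rpow_pos_of_pos ht (-(β * d / α))
    field_simp
  · subst hdα
    rw [show β * d / d = β by field_simp] at hker
    have hint := profile_integrable_log (F0 := F0) (κ := β / d) hFpos hFanti hC₂ hκ
      (by simpa using hFint)
    have hlim := core_log hβ0 hβ1 hsupp hlap' hφ hφ0 hφB hφlim hint
    obtain ⟨R, hR, h⟩ := ratio_close hlim (by positivity) hε
    refine ⟨R, by linarith, fun t ht x y hxy hz => ?_⟩
    convert h _ hz using 3
    rw [hker t ht x y hxy]
    have := Real.rpow_pos_of_pos ht (-β)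
    have := Real.log_pos (hR.trans_le hz)
    field_simp
  · have he : (-1 : ℝ) < d - α - 1 := by linarith
    obtain ⟨hi, hint⟩ := profile_integrable_heavy (F0 := F0) (κ := β / α) hFpos hFanti hC₂ hκ he hFint
    have hval := profile_integral (F := F) (F0 := F0) hC₂ hκ (d - α - 1)
    have hexp : β / α * (d - α - 1 + 1) - 1 = β * d / α - β - 1 := by field_simp; ring
    rw [hexp] at hint hval
    have hJ : 0 < ∫ s in Ioi (0:ℝ), s ^ (d - α - 1) * F s := by
      have hpos : ∀ s ∈ Ioi (0:ℝ), 0 < s ^ (d - α - 1) * F s := fun s hs =>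
        mul_pos (Real.rpow_pos_of_pos hs _) (hFpos s (mem_Ioi.1 hs).le)
      rw [setIntegral_pos_iff_support_of_nonneg_ae _ hi]
      · rw [inter_eq_right.2 (fun s hs => Function.mem_support.2 (hpos s hs).ne'), Real.volume_Ioi]
        exact ENNReal.zero_lt_top
      · filter_upwards [ae_restrict_mem measurableSet_Ioi] with s hs using (hpos s hs).le
    have hlim := core_heavy hβ0 hβ1 hsupp hlap' hφ hφ0 hφB hγ hint
    rw [hval, show -(d - α - 1 + 1) = α - d by ring] at hlim
    have hC := Real.rpow_pos_of_pos hC₂ (α - d)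
    obtain ⟨R, hR, h⟩ := ratio_close hlim (by positivity) hε
    refine ⟨R, by linarith, fun t ht x y hxy hz => ?_⟩
    have hρ := dist_pos.2 hxy
    convert h _ hz using 3
    rw [hker t ht x y hxy]
    have hscale : t ^ (-(β * d / α)) = dist x y ^ (α - d) * t ^ (-β) *
        (dist x y ^ (-(α/β)) * t) ^ (β - β * d / α) := by
      rw [Real.mul_rpow (by positivity) ht.le, ← Real.rpow_mul hρ.le, mul_mul_mul_comm,
        ← Real.rpow_add hρ, ← Real.rpow_add ht,
        show α - d + -(α / β) * (β - β * d / α) = 0 by field_simp; ring, Real.rpow_zero, one_mul]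
      congr 1
      ring
    have h1 := Real.rpow_pos_of_pos ht (-β)
    have h2 := Real.rpow_pos_of_pos hρ (α - d)
    rw [hscale]
    field_simp
end
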